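/- Let u, w ∈ [1,γ] \ {1} and let A, B ∈ Γ₊. If A·⟨u⟩ = B·⟨w⟩ in Γ₊, then there exist e, f ∈ [1,γ] and C ∈ Γ₊ such that A = C·⟨e⟩ and B = C·⟨f⟩ in Γ₊ (where ⟨1⟩ is interpreted as the identity of Γ₊), eu = fw, and eu is a least upper bound of {u,w} in ([1,γ],≤). -/

import Mathlib

variable {B : Type*} {W : Type*} [Group W] {M : CoxeterMatrix B}

/-- The reflection length of `w`: the least `k` such that `w` is a product of `k`
reflections (conjugates of simple reflections). -/
noncomputable def rlen (cs : CoxeterSystem M W) (w : W) : ℕ :=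
  sInf {k | ∃ l : List W, (∀ t ∈ l, cs.IsReflection t) ∧ l.length = k ∧ l.prod = w}

/-- The reflection (absolute) order on `W`: `u ≤ w` iff `ℓ(w) = ℓ(u) + ℓ(u⁻¹w)`. -/
def rle (cs : CoxeterSystem M W) (u w : W) : Prop :=
  rlen cs w = rlen cs u + rlen cs (u⁻¹ * w)

/-- A Coxeter element: a conjugate of a product of all the simple reflections,
each occurring exactly once, in some order. -/
def IsCoxeterElement [Fintype B] (cs : CoxeterSystem M W) (γ : W) : Prop :=
  ∃ (v : W) (l : List B), l.Nodup ∧ (∀ i : B, i ∈ l) ∧ γ = v * cs.wordProd l * v⁻¹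

/-- `p` is a least upper bound of the set `s` within the interval `[1,γ]`
under the reflection order. -/
def IsIntervalLUB (cs : CoxeterSystem M W) (γ : W) (s : Set W) (p : W) : Prop :=
  rle cs p γ ∧ (∀ x ∈ s, rle cs x p) ∧
    ∀ r, rle cs r γ → (∀ x ∈ s, rle cs x r) → rle cs p r

/-- The generating set of the poset group/monoid: the interval `[1,γ]` minus the identity. -/
abbrev NCGen (cs : CoxeterSystem M W) (γ : W) : Type _ :=
  {w : W // w ≠ 1 ∧ rle cs w γ}

/-- The defining relations of the positive monoid `Γ₊(W,γ)`:
`⟨w₁⟩⟨w₂⟩ = ⟨w₃⟩` whenever `w₁w₂ = w₃` in `W` and `ℓ(w₁) + ℓ(w₂) = ℓ(w₃)`. -/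
def posRels (cs : CoxeterSystem M W) (γ : W) :
    FreeMonoid (NCGen cs γ) → FreeMonoid (NCGen cs γ) → Prop :=
  fun x y => ∃ w₁ w₂ w₃ : NCGen cs γ,
    x = FreeMonoid.of w₁ * FreeMonoid.of w₂ ∧ y = FreeMonoid.of w₃ ∧
    (w₁ : W) * (w₂ : W) = (w₃ : W) ∧
    rlen cs (w₁ : W) + rlen cs (w₂ : W) = rlen cs (w₃ : W)

/-- The positive monoid `Γ₊(W,γ)`, presented by the generators `⟨w⟩`, `w ∈ [1,γ] \ {1}`,
and the relations `posRels`. -/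
abbrev PosMonoid (cs : CoxeterSystem M W) (γ : W) := PresentedMonoid (posRels cs γ)

open Classical in
/-- The generator `⟨w⟩` of `Γ₊(W,γ)` for `w ∈ [1,γ]`, interpreting `⟨1⟩` as the
identity of the monoid (and defaulting to the identity off the interval). -/
noncomputable def pgen (cs : CoxeterSystem M W) (γ : W) (w : W) : PosMonoid cs γ :=
  if h : w ≠ 1 ∧ rle cs w γ then PresentedMonoid.of (posRels cs γ) ⟨w, h⟩ else 1

/-!
The interval `[1, γ]` has binary meets, and the right suffix property is a formal consequence of
this.

*Meets.* Let `W` act on `ℝ^S` by the geometric representation, and order the simple roots as in the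
product defining `γ`. Twice the Tits form, which is invariant and positive definite, is the
symmetrisation of a form `χ` triangular with respect to this order. A sequence of roots is
*exceptional* if `χ a b = 0` whenever `a` comes before `b`. The product of the reflections in an
exceptional sequence depends only on its span, a factorisation of `γ` into the least number of
reflections is an exceptional sequence of roots, and every exceptional sequence of roots extends to
one with product `γ`. Hence `[1, γ]` is the set of spans of exceptional sequences of roots, ordered
by inclusion.

Each such span contains an exceptional sequence which is a simple system for the roots in the span.
Removing its first root, reflecting the others in it and appending its negative gives another one.
These rotations are eventually periodic, and a vector in the cones of all of them is orthogonal to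
the span, so every nonzero vector leaves the cone after finitely many rotations. Induction on their
number shows that a vector of the cone is a positive combination of an exceptional sequence of
positive roots on which the off-diagonal values of `χ` are nonnegative, and ordering the roots by
this number shows that the expansion is unique. Given two spans, a generic positive combination of
the positive roots in their intersection therefore has the same expansion in both, so the roots in
the intersection span an exceptional subspace: the meet.

*The monoid.* For `r` and `a` in `[1, γ]` there is a largest `d` such that `d ≤ r` and `d a` lies in
`[1, γ]` with `ℓ(d a) = ℓ(d) + ℓ(a)`. Sending `(Q, r)` to `(Q ⟨r d⁻¹⟩, d a)` respects the defining
relations, so `Γ₊` acts on `Γ₊ × [1, γ]` from the right, and the image `(Q, p)` of `(1, 1)` under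
`X` satisfies `Q ⟨p⟩ = X`. If `X = A ⟨u⟩ = B ⟨w⟩`, then `p` lies above `u` and `w`, hence above
their join, and `A = Q ⟨p u⁻¹⟩`, `B = Q ⟨p w⁻¹⟩`.
-/

namespace Noncrossing

/-! ### Spans, cones and reflections -/

section ListSpan

variable {𝕜 V : Type*} [Ring 𝕜] [AddCommGroup V] [Module 𝕜 V]

variable (𝕜) in
/-- The linear span of the members of a list of vectors. -/
def listSpan (l : List V) : Submodule 𝕜 V := Submodule.span 𝕜 {x | x ∈ l}

variable {l l' : List V} {a x : V}

theorem mem_listSpan (h : x ∈ l) : x ∈ listSpan 𝕜 l := Submodule.subset_span h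

theorem listSpan_le {U : Submodule 𝕜 V} : listSpan 𝕜 l ≤ U ↔ ∀ x ∈ l, x ∈ U :=
  Submodule.span_le

theorem listSpan_mono (h : l ⊆ l') : listSpan 𝕜 l ≤ listSpan 𝕜 l' := Submodule.span_mono h

theorem listSpan_perm (h : l.Perm l') : listSpan 𝕜 l = listSpan 𝕜 l' := by
  simp only [listSpan, h.mem_iff]

theorem listSpan_append : listSpan 𝕜 (l ++ l') = listSpan 𝕜 l ⊔ listSpan 𝕜 l' := by
  rw [listSpan, listSpan, listSpan, ← Submodule.span_union]
  congr 1
  ext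
  simp

theorem listSpan_map (g : V →ₗ[𝕜] V) : listSpan 𝕜 (l.map g) = (listSpan 𝕜 l).map g := by
  rw [listSpan, listSpan, Submodule.map_span]
  congr 1
  ext
  simp

theorem mem_listSpan_cons :
    x ∈ listSpan 𝕜 (a :: l) ↔ ∃ c : 𝕜, ∃ y ∈ listSpan 𝕜 l, x = c • a + y := by
  have hset : {x | x ∈ a :: l} = insert a {x | x ∈ l} := by ext; simp
  rw [listSpan, hset, Submodule.mem_span_insert]
  rfl

theorem map_eq_zero_of_mem_listSpan {f : V →ₗ[𝕜] 𝕜} (hf : ∀ a ∈ l, f a = 0)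
    (hx : x ∈ listSpan 𝕜 l) : f x = 0 :=
  listSpan_le (U := LinearMap.ker f).2 hf hx

theorem mem_listSpan_of_mem_cons {f : V →ₗ[𝕜] 𝕜} (hf : ∀ b ∈ l, f b = 0) (ha : f a = 1)
    (hx : x ∈ listSpan 𝕜 (a :: l)) (h : f x = 0) : x ∈ listSpan 𝕜 l := by
  obtain ⟨c, y, hy, rfl⟩ := mem_listSpan_cons.1 hx
  have hc : c = 0 := by simpa [map_eq_zero_of_mem_listSpan hf hy, ha] using h
  simpa [hc] using hy

end ListSpan

section ListCone

variable {𝕜 V : Type*} [Ring 𝕜] [PartialOrder 𝕜] [IsOrderedRing 𝕜] [AddCommGroup V]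
  [Module 𝕜 V]

variable (𝕜) in
/-- The convex cone of the non-negative combinations of the members of a list of vectors. -/
def listCone (l : List V) : PointedCone 𝕜 V := PointedCone.hull 𝕜 {x | x ∈ l}

variable {l l' : List V} {a x : V}

theorem mem_listCone (h : x ∈ l) : x ∈ listCone 𝕜 l := PointedCone.subset_hull h

theorem listCone_le {C : PointedCone 𝕜 V} : listCone 𝕜 l ≤ C ↔ ∀ x ∈ l, x ∈ C :=
  Submodule.span_le

theorem mem_listSpan_of_mem_listCone (h : x ∈ listCone 𝕜 l) : x ∈ listSpan 𝕜 l :=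
  PointedCone.hull_le_span 𝕜 _ h

theorem listCone_mono (h : l ⊆ l') : listCone 𝕜 l ≤ listCone 𝕜 l' := Submodule.span_mono h

theorem listCone_perm (h : l.Perm l') : listCone 𝕜 l = listCone 𝕜 l' := by
  simp only [listCone, h.mem_iff]

theorem listCone_map (g : V →ₗ[𝕜] V) : listCone 𝕜 (l.map g) = (listCone 𝕜 l).map g := by
  rw [listCone, listCone, PointedCone.map, Submodule.map_span]
  congr 1
  ext
  simp

theorem mem_listCone_cons :
    x ∈ listCone 𝕜 (a :: l) ↔ ∃ c : 𝕜, 0 ≤ c ∧ ∃ y ∈ listCone 𝕜 l, x = c • a + y := by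
  have hset : {x | x ∈ a :: l} = insert a {x | x ∈ l} := by ext; simp
  rw [listCone, hset, PointedCone.hull, Submodule.mem_span_insert]
  constructor
  · rintro ⟨c, y, hy, rfl⟩
    exact ⟨c, c.2, y, hy, rfl⟩
  · rintro ⟨c, hc, y, hy, rfl⟩
    exact ⟨⟨c, hc⟩, y, hy, rfl⟩

theorem map_nonneg_of_mem_listCone {f : V →ₗ[𝕜] 𝕜} (hf : ∀ a ∈ l, 0 ≤ f a)
    (hx : x ∈ listCone 𝕜 l) : 0 ≤ f x :=
  listCone_le (C := (PointedCone.positive 𝕜 𝕜).comap f).2 hf hx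

theorem mem_listCone_of_mem_cons {f : V →ₗ[𝕜] 𝕜} (hf : ∀ b ∈ l, f b = 0) (ha : f a = 1)
    (hx : x ∈ listCone 𝕜 (a :: l)) (h : f x = 0) : x ∈ listCone 𝕜 l := by
  obtain ⟨c, -, y, hy, rfl⟩ := mem_listCone_cons.1 hx
  have hc : c = 0 := by
    simpa [map_eq_zero_of_mem_listSpan hf (mem_listSpan_of_mem_listCone hy), ha] using h
  simpa [hc] using hy

end ListCone

section Reflections

variable {𝕜 V : Type*} [CommRing 𝕜] [AddCommGroup V] [Module 𝕜 V]

/-- The reflection in a vector `a` with `χ a a = 1` for the symmetric form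
`(x, y) ↦ χ x y + χ y x`. -/
def symmReflection (χ : LinearMap.BilinForm 𝕜 V) (a : V) : Module.End 𝕜 V :=
  Module.preReflection a (χ a + χ.flip a)

/-- The product of the reflections in the members of a list of vectors. -/
def reflectionProd (χ : LinearMap.BilinForm 𝕜 V) (l : List V) : Module.End 𝕜 V :=
  (l.map (symmReflection χ)).prod

variable {χ : LinearMap.BilinForm 𝕜 V} {a b c : V}

theorem symmReflection_apply (a x : V) : symmReflection χ a x = x - (χ a x + χ x a) • a := rfl

theorem symmReflection_neg (a : V) : symmReflection χ (-a) = symmReflection χ a := by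
  ext x
  simp only [symmReflection_apply, map_neg, LinearMap.neg_apply]
  module

theorem symmReflection_self (ha : χ a a = 1) : symmReflection χ a a = -a := by
  rw [symmReflection_apply, ha]
  module

theorem symmReflection_symmReflection (ha : χ a a = 1) (x : V) :
    symmReflection χ a (symmReflection χ a x) = x :=
  Module.involutive_preReflection (by simp [ha, one_add_one_eq_two]) x

theorem apply_symmReflection_add_swap (ha : χ a a = 1) (x y : V) :
    χ (symmReflection χ a x) (symmReflection χ a y) +
      χ (symmReflection χ a y) (symmReflection χ a x) = χ x y + χ y x := by
  simp only [symmReflection_apply, map_sub, map_smul, LinearMap.sub_apply, LinearMap.smul_apply,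
    ha, smul_eq_mul]
  ring

theorem apply_symmReflection_of_left_orthogonal (ha : χ a a = 1) (hb : χ a b = 0)
    (hc : χ a c = 0) : χ (symmReflection χ a b) (symmReflection χ a c) = χ b c := by
  simp only [symmReflection_apply, map_sub, map_smul, LinearMap.sub_apply, LinearMap.smul_apply,
    ha, hb, hc, smul_eq_mul]
  ring

theorem apply_symmReflection_of_right_orthogonal (ha : χ a a = 1) (hb : χ b a = 0)
    (hc : χ c a = 0) : χ (symmReflection χ a b) (symmReflection χ a c) = χ b c := by
  simp only [symmReflection_apply, map_sub, map_smul, LinearMap.sub_apply, LinearMap.smul_apply,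
    ha, hb, hc, smul_eq_mul]
  ring

theorem apply_self_symmReflection (ha : χ a a = 1) (x : V) :
    χ a (symmReflection χ a x) = -χ x a := by
  simp only [symmReflection_apply, map_sub, map_smul, ha, smul_eq_mul]
  ring

theorem apply_symmReflection_self (ha : χ a a = 1) (x : V) :
    χ (symmReflection χ a x) a = -χ a x := by
  simp only [symmReflection_apply, map_sub, map_smul, LinearMap.sub_apply, LinearMap.smul_apply,
    ha, smul_eq_mul]
  ring

theorem symmReflection_mem {U : Submodule 𝕜 V} (ha : a ∈ U) {x : V} (hx : x ∈ U) :
    symmReflection χ a x ∈ U :=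
  U.sub_mem hx (U.smul_mem _ ha)

theorem map_symmReflection {U : Submodule 𝕜 V} (ha : χ a a = 1) (haU : a ∈ U) :
    U.map (symmReflection χ a) = U := by
  refine le_antisymm (Submodule.map_le_iff_le_comap.2 fun x => symmReflection_mem haU) fun x hx =>
    ⟨symmReflection χ a x, symmReflection_mem haU hx, symmReflection_symmReflection ha x⟩

theorem reflectionProd_nil : reflectionProd χ [] = 1 := rfl

theorem reflectionProd_cons (a : V) (l : List V) :
    reflectionProd χ (a :: l) = symmReflection χ a * reflectionProd χ l := by
  simp [reflectionProd]

theorem reflectionProd_append (l l' : List V) :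
    reflectionProd χ (l ++ l') = reflectionProd χ l * reflectionProd χ l' := by
  simp [reflectionProd]

theorem apply_linearCombination (a : V) (f : V →₀ 𝕜) :
    χ a (Finsupp.linearCombination 𝕜 id f) = ∑ x ∈ f.support, f x * χ a x := by
  simp [Finsupp.linearCombination_apply, Finsupp.sum]

end Reflections

/-! ### Exceptional sequences -/

section Exceptional

variable {𝕜 V : Type*} [CommRing 𝕜] [AddCommGroup V] [Module 𝕜 V]

/-- An exceptional sequence for the (non-symmetric) bilinear form `χ`: `χ a a = 1` for every
member `a`, and `χ a b = 0` whenever `a` comes before `b`. -/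
structure IsExceptional (χ : LinearMap.BilinForm 𝕜 V) (l : List V) : Prop where
  unit : ∀ a ∈ l, χ a a = 1
  pairwise : l.Pairwise fun a b => χ a b = 0

variable {χ : LinearMap.BilinForm 𝕜 V} {a x y : V} {l l' : List V}

namespace IsExceptional

theorem cons_iff : IsExceptional χ (a :: l) ↔
    χ a a = 1 ∧ (∀ b ∈ l, χ a b = 0) ∧ IsExceptional χ l := by
  constructor
  · rintro ⟨hu, hp⟩
    rw [List.forall_mem_cons] at hu
    rw [List.pairwise_cons] at hp
    exact ⟨hu.1, hp.1, hu.2, hp.2⟩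
  · rintro ⟨ha, hal, hl⟩
    exact ⟨List.forall_mem_cons.2 ⟨ha, hl.unit⟩, List.pairwise_cons.2 ⟨hal, hl.pairwise⟩⟩

theorem append_iff : IsExceptional χ (l ++ l') ↔
    IsExceptional χ l ∧ IsExceptional χ l' ∧ ∀ a ∈ l, ∀ b ∈ l', χ a b = 0 := by
  constructor
  · rintro ⟨hu, hp⟩
    rw [List.forall_mem_append] at hu
    rw [List.pairwise_append] at hp
    exact ⟨⟨hu.1, hp.1⟩, ⟨hu.2, hp.2.1⟩, hp.2.2⟩
  · rintro ⟨hl, hl', h⟩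
    exact ⟨List.forall_mem_append.2 ⟨hl.unit, hl'.unit⟩,
      List.pairwise_append.2 ⟨hl.pairwise, hl'.pairwise, h⟩⟩

/-- Gram–Schmidt orthogonalisation against an exceptional sequence. -/
theorem listSpan_sup_orthogonal (he : IsExceptional χ l) :
    listSpan 𝕜 l ⊔ χ.orthogonal (listSpan 𝕜 l) = ⊤ := by
  induction l with
  | nil =>
    refine eq_top_iff.2 fun x _ => Submodule.mem_sup_right fun y hy => ?_
    have hy0 : y = 0 := by simpa [listSpan] using hy
    simp [hy0]
  | cons a l ih =>
    obtain ⟨ha, hal, hl⟩ := cons_iff.1 he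
    refine eq_top_iff.2 fun x _ => ?_
    obtain ⟨s, hs, r, hr, hsr⟩ := Submodule.mem_sup.1
      ((ih hl).ge (Submodule.mem_top (x := x - χ a x • a)))
    have has : χ a s = 0 := map_eq_zero_of_mem_listSpan hal hs
    have har : χ a r = 0 := by
      have := congrArg (χ a) hsr
      simpa [has, ha] using this
    refine Submodule.mem_sup.2 ⟨χ a x • a + s, mem_listSpan_cons.2 ⟨_, s, hs, rfl⟩, r, ?_, ?_⟩
    · intro y hy
      obtain ⟨c, z, hz, rfl⟩ := mem_listSpan_cons.1 hy
      have hzr : χ z r = 0 := hr z hz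
      simp [har, hzr]
    · rw [add_assoc, hsr]
      abel

end IsExceptional

theorem sub_reflectionProd_mem (l : List V) (x : V) :
    x - reflectionProd χ l x ∈ listSpan 𝕜 l := by
  induction l with
  | nil => simp [reflectionProd_nil]
  | cons a l ih =>
    rw [reflectionProd_cons, Module.End.mul_apply, symmReflection_apply, sub_sub_eq_add_sub,
      add_sub_right_comm]
    exact add_mem (listSpan_mono (List.subset_cons_self a l) ih)
      (Submodule.smul_mem _ _ (mem_listSpan List.mem_cons_self))

theorem IsExceptional.apply_sub_reflectionProd (he : IsExceptional χ l) (x : V)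
    (hy : y ∈ listSpan 𝕜 l) : χ (x - reflectionProd χ l x) y = χ x y + χ y x := by
  induction l generalizing y with
  | nil =>
    have hy0 : y = 0 := by simpa [listSpan] using hy
    simp [hy0]
  | cons a l ih =>
    obtain ⟨ha, hal, hl⟩ := IsExceptional.cons_iff.1 he
    obtain ⟨c, z, hz, rfl⟩ := mem_listSpan_cons.1 hy
    have hxz := ih hl hz
    have haz : χ a z = 0 := map_eq_zero_of_mem_listSpan hal hz
    have hax : χ a (x - reflectionProd χ l x) = 0 :=
      map_eq_zero_of_mem_listSpan hal (sub_reflectionProd_mem l x)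
    simp only [reflectionProd_cons, Module.End.mul_apply, symmReflection_apply, map_sub, map_add,
      map_smul, LinearMap.sub_apply, LinearMap.add_apply, LinearMap.smul_apply, smul_eq_mul, haz,
      ha] at hxz hax ⊢
    linear_combination hxz - c * hax

/-- By `apply_sub_reflectionProd`, the span determines `χ (x - w x)` on it, for the product `w`
of the reflections, and therefore determines `w`. -/
theorem IsExceptional.reflectionProd_eq (hχ : ∀ x, χ x x = 0 → x = 0) (he : IsExceptional χ l)
    (he' : IsExceptional χ l') (h : listSpan 𝕜 l = listSpan 𝕜 l') :
    reflectionProd χ l = reflectionProd χ l' := by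
  ext x
  have hd : (x - reflectionProd χ l' x) - (x - reflectionProd χ l x) ∈ listSpan 𝕜 l :=
    sub_mem (h ▸ sub_reflectionProd_mem l' x) (sub_reflectionProd_mem l x)
  have hperp {y : V} (hy : y ∈ listSpan 𝕜 l) :
      χ ((x - reflectionProd χ l' x) - (x - reflectionProd χ l x)) y = 0 := by
    rw [map_sub, LinearMap.sub_apply, he.apply_sub_reflectionProd x hy,
      he'.apply_sub_reflectionProd x (h ▸ hy), sub_self]
  simpa [sub_eq_zero] using hχ _ (hperp hd)

/-- The rotation `(a₁, …, aₖ) ↦ (s a₂, …, s aₖ, -a₁)`, with `s` the reflection in `a₁`. -/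
def rotate (χ : LinearMap.BilinForm 𝕜 V) : List V → List V
  | [] => []
  | a :: l => l.map (symmReflection χ a) ++ [-a]

theorem rotate_cons (a : V) (l : List V) :
    rotate χ (a :: l) = l.map (symmReflection χ a) ++ [-a] := rfl

theorem length_rotate (l : List V) : (rotate χ l).length = l.length := by
  cases l <;> simp [rotate]

theorem rotate_perm (ha : χ a a = 1) (l : List V) :
    (rotate χ (a :: l)).Perm ((a :: l).map (symmReflection χ a)) := by
  rw [rotate_cons, List.map_cons, symmReflection_self ha]
  exact List.perm_append_singleton _ _

theorem listSpan_rotate (hl : ∀ a ∈ l, χ a a = 1) : listSpan 𝕜 (rotate χ l) = listSpan 𝕜 l := by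
  cases l with
  | nil => rfl
  | cons a l =>
    have ha := hl a List.mem_cons_self
    rw [listSpan_perm (rotate_perm ha l), listSpan_map,
      map_symmReflection ha (mem_listSpan List.mem_cons_self)]

theorem mem_of_forall_iterate_rotate_head {l₁ l₂ : List V} {U : Submodule 𝕜 V}
    (hU : ∀ i a t, (rotate χ)^[i] (l₁ ++ x :: l₂) = a :: t → a ∈ U) : x ∈ U := by
  induction hn : l₁.length generalizing l₁ l₂ x with
  | zero =>
    rw [List.length_eq_zero_iff.1 hn] at hU
    exact hU 0 x l₂ rfl
  | succ n ih =>
    cases l₁ with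
    | nil => simp at hn
    | cons a l₁ =>
      have ha : a ∈ U := hU 0 a _ rfl
      have hrot : rotate χ (a :: (l₁ ++ x :: l₂)) = l₁.map (symmReflection χ a) ++
          symmReflection χ a x :: (l₂.map (symmReflection χ a) ++ [-a]) := by
        simp [rotate_cons]
      have hx : symmReflection χ a x ∈ U :=
        ih (fun i b t h => hU (i + 1) b t (by rwa [← hrot] at h)) (by simpa using hn)
      exact (U.sub_mem_iff_left (U.smul_mem _ ha)).1 hx

end Exceptional

section RootSystems

variable {𝕜 V : Type*} [Field 𝕜] [LinearOrder 𝕜] [AddCommGroup V] [Module 𝕜 V]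

/-- A finite set `Φ` of vectors, stable under the reflections in its members, all of length one
for the positive definite bilinear form `χ`. -/
structure IsRootSystem (χ : LinearMap.BilinForm 𝕜 V) (Φ : Set V) : Prop where
  pos : ∀ x, x ≠ 0 → 0 < χ x x
  unit : ∀ x ∈ Φ, χ x x = 1
  finite : Φ.Finite
  symmReflection_mem : ∀ a ∈ Φ, ∀ x ∈ Φ, symmReflection χ a x ∈ Φ

variable {χ : LinearMap.BilinForm 𝕜 V} {Φ : Set V} {x : V} {l : List V}

namespace IsRootSystem

variable (hR : IsRootSystem χ Φ)
include hR

theorem ne_zero (hx : x ∈ Φ) : x ≠ 0 := by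
  rintro rfl
  simpa using hR.unit 0 hx

theorem neg_mem (hx : x ∈ Φ) : -x ∈ Φ := by
  simpa [symmReflection_self (hR.unit x hx)] using hR.symmReflection_mem x hx x hx

theorem eq_zero (x : V) (hx : χ x x = 0) : x = 0 :=
  by_contra fun h => (hR.pos x h).ne' hx

theorem reflectionProd_mem (hl : ∀ a ∈ l, a ∈ Φ) (hx : x ∈ Φ) : reflectionProd χ l x ∈ Φ := by
  induction l with
  | nil => simpa [reflectionProd_nil]
  | cons a l ih =>
    rw [List.forall_mem_cons] at hl
    exact hR.symmReflection_mem a hl.1 _ (ih hl.2)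

end IsRootSystem

end RootSystems

section SimpleSequences

variable {𝕜 V : Type*} [Field 𝕜] [LinearOrder 𝕜] [IsStrictOrderedRing 𝕜] [AddCommGroup V]
  [Module 𝕜 V]

/-- A simple exceptional sequence: an exceptional sequence `l` of roots with non-positive
off-diagonal values of `χ` such that every root in its span is a non-negative or a non-positive
combination of `l`. Its members form a simple system of the root system `Φ ∩ listSpan 𝕜 l`, and
are ordered in such a way that `χ` is unitriangular on them. -/
structure IsSimpleSeq (χ : LinearMap.BilinForm 𝕜 V) (Φ : Set V) (l : List V) : Prop where
  mem_root : ∀ a ∈ l, a ∈ Φ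
  pairwise : l.Pairwise fun a b => χ a b = 0 ∧ χ b a ≤ 0
  mem_or_neg_mem : ∀ x ∈ Φ, x ∈ listSpan 𝕜 l → x ∈ listCone 𝕜 l ∨ -x ∈ listCone 𝕜 l

variable {χ : LinearMap.BilinForm 𝕜 V} {Φ : Set V} {a x y : V} {l l' : List V}

/-- The triangularity of `χ` makes the cone of an exceptional sequence salient. -/
theorem IsExceptional.eq_zero_of_add_eq_zero (he : IsExceptional χ l) (hx : x ∈ listCone 𝕜 l)
    (hy : y ∈ listCone 𝕜 l) (h : x + y = 0) : x = 0 := by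
  induction l generalizing x y with
  | nil => simpa [listCone, PointedCone.hull] using hx
  | cons a l ih =>
    obtain ⟨ha, hal, hl⟩ := IsExceptional.cons_iff.1 he
    have hnonneg {z : V} (hz : z ∈ listCone 𝕜 (a :: l)) : 0 ≤ χ a z :=
      map_nonneg_of_mem_listCone
        (List.forall_mem_cons.2 ⟨ha.symm ▸ zero_le_one, fun b hb => (hal b hb).ge⟩) hz
    have hsum : χ a x + χ a y = 0 := by rw [← map_add, h, map_zero]
    exact ih hl (mem_listCone_of_mem_cons hal ha hx (by linarith [hnonneg hx, hnonneg hy]))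
      (mem_listCone_of_mem_cons hal ha hy (by linarith [hnonneg hx, hnonneg hy])) h

theorem IsRootSystem.eq_of_eq_smul (hR : IsRootSystem χ Φ) (hx : x ∈ Φ)
    (ha : a ∈ Φ) {c : 𝕜} (hc : 0 ≤ c) (h : x = c • a) : x = a := by
  have hcc : c * c = 1 := by simpa [h, hR.unit a ha] using hR.unit x hx
  have hc1 : c = 1 := by nlinarith
  rw [h, hc1, one_smul]

namespace IsSimpleSeq

theorem isExceptional (hR : IsRootSystem χ Φ) (hS : IsSimpleSeq χ Φ l) : IsExceptional χ l :=
  ⟨fun a ha => hR.unit a (hS.mem_root a ha), hS.pairwise.imp fun h => h.1⟩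

theorem of_perm_cons (hS : IsSimpleSeq χ Φ l') (hperm : l'.Perm (a :: l)) (hsub : l.Sublist l')
    {f : V →ₗ[𝕜] 𝕜} (hf : ∀ b ∈ l, f b = 0) (ha : f a = 1) : IsSimpleSeq χ Φ l where
  mem_root b hb := hS.mem_root b (hsub.subset hb)
  pairwise := hS.pairwise.sublist hsub
  mem_or_neg_mem x hx hxl := by
    have hfx : f x = 0 := map_eq_zero_of_mem_listSpan hf hxl
    have h := hS.mem_or_neg_mem x hx (listSpan_mono hsub.subset hxl)
    rw [listCone_perm hperm] at h
    exact h.imp (mem_listCone_of_mem_cons hf ha · hfx)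
      (mem_listCone_of_mem_cons hf ha · (by rw [map_neg, hfx, neg_zero]))

theorem map_symmReflection (hR : IsRootSystem χ Φ) (hS : IsSimpleSeq χ Φ l) (ha : a ∈ l)
    (hperm : l'.Perm (l.map (symmReflection χ a)))
    (hpw : l'.Pairwise fun a b => χ a b = 0 ∧ χ b a ≤ 0) : IsSimpleSeq χ Φ l' where
  mem_root b hb := by
    obtain ⟨c, hc, rfl⟩ := List.mem_map.1 (hperm.subset hb)
    exact hR.symmReflection_mem a (hS.mem_root a ha) c (hS.mem_root c hc)
  pairwise := hpw
  mem_or_neg_mem x hx hxl := by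
    have haΦ := hS.mem_root a ha
    have hinv := symmReflection_symmReflection (hR.unit a haΦ)
    rw [listSpan_perm hperm, listSpan_map, Noncrossing.map_symmReflection (hR.unit a haΦ)
      (mem_listSpan ha)] at hxl
    rw [listCone_perm hperm, listCone_map]
    exact (hS.mem_or_neg_mem _ (hR.symmReflection_mem a haΦ x hx)
      (symmReflection_mem (mem_listSpan ha) hxl)).imp
      (fun h => ⟨_, h, hinv x⟩) (fun h => ⟨_, h, by simp [hinv x]⟩)

end IsSimpleSeq

theorem mem_listCone_rotate_cons (ha : χ a a = 1) :
    x ∈ listCone 𝕜 (rotate χ (a :: l)) ↔ symmReflection χ a x ∈ listCone 𝕜 (a :: l) := by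
  rw [listCone_perm (rotate_perm ha l), listCone_map, PointedCone.mem_map]
  constructor
  · rintro ⟨y, hy, rfl⟩
    rwa [symmReflection_symmReflection ha]
  · exact fun h => ⟨_, h, symmReflection_symmReflection ha x⟩

namespace IsSimpleSeq

variable (hR : IsRootSystem χ Φ)
include hR

theorem rotate (hS : IsSimpleSeq χ Φ l) : IsSimpleSeq χ Φ (rotate χ l) := by
  cases l with
  | nil => exact hS
  | cons a l =>
    have ha := hR.unit a (hS.mem_root a List.mem_cons_self)
    obtain ⟨hal, hl⟩ := List.pairwise_cons.1 hS.pairwise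
    refine hS.map_symmReflection hR List.mem_cons_self (rotate_perm ha l) ?_
    rw [rotate_cons, List.pairwise_append, List.pairwise_map]
    refine ⟨hl.imp_of_mem fun {b c} hb hc h => ?_, List.pairwise_singleton _ _, ?_⟩
    · rwa [apply_symmReflection_of_left_orthogonal ha (hal b hb).1 (hal c hc).1,
        apply_symmReflection_of_left_orthogonal ha (hal c hc).1 (hal b hb).1]
    · simp only [List.forall_mem_map, List.mem_singleton, forall_eq]
      intro b hb
      simpa [apply_symmReflection_self ha, apply_self_symmReflection ha] using hal b hb

theorem iterate_rotate (hS : IsSimpleSeq χ Φ l) (j : ℕ) :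
    IsSimpleSeq χ Φ ((Noncrossing.rotate χ)^[j] l) :=
  Function.Iterate.rec (IsSimpleSeq χ Φ) hS (fun _ h => rotate hR h) j

theorem tail (hS : IsSimpleSeq χ Φ (a :: l)) : IsSimpleSeq χ Φ l :=
  hS.of_perm_cons (.refl _) (List.sublist_cons_self a l)
    (fun b hb => ((List.pairwise_cons.1 hS.pairwise).1 b hb).1)
    (hR.unit a (hS.mem_root a List.mem_cons_self))

theorem apply_eq_zero_of_mem_listSpan_map (hS : IsSimpleSeq χ Φ (a :: l))
    (hx : x ∈ listSpan 𝕜 (l.map (symmReflection χ a))) : χ x a = 0 := by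
  refine map_eq_zero_of_mem_listSpan (f := χ.flip a) (List.forall_mem_map.2 fun b hb => ?_) hx
  rw [LinearMap.BilinForm.flip_apply,
    apply_symmReflection_self (hR.unit a (hS.mem_root a List.mem_cons_self)),
    ((List.pairwise_cons.1 hS.pairwise).1 b hb).1, neg_zero]

theorem map_tail (hS : IsSimpleSeq χ Φ (a :: l)) :
    IsSimpleSeq χ Φ (l.map (symmReflection χ a)) := by
  have ha := hR.unit a (hS.mem_root a List.mem_cons_self)
  refine (hS.rotate hR).of_perm_cons (a := -a) (f := -χ.flip a) (List.perm_append_singleton _ _)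
    (List.sublist_append_left _ _) (fun b hb => ?_) (by simp [ha])
  rw [LinearMap.neg_apply, LinearMap.BilinForm.flip_apply,
    hS.apply_eq_zero_of_mem_listSpan_map hR (mem_listSpan hb), neg_zero]

theorem head_nonneg (hS : IsSimpleSeq χ Φ (a :: l)) (hx : x ∈ listCone 𝕜 (a :: l)) :
    0 ≤ χ a x :=
  map_nonneg_of_mem_listCone (List.forall_mem_cons.2
    ⟨hR.unit a (hS.mem_root a List.mem_cons_self) ▸ zero_le_one,
      fun b hb => ((List.pairwise_cons.1 hS.pairwise).1 b hb).1.ge⟩) hx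

theorem apply_head_nonpos (hS : IsSimpleSeq χ Φ (a :: l))
    (hx : x ∈ listCone 𝕜 (Noncrossing.rotate χ (a :: l))) : χ x a ≤ 0 := by
  have ha := hR.unit a (hS.mem_root a List.mem_cons_self)
  simpa [apply_self_symmReflection ha] using hS.head_nonneg hR ((mem_listCone_rotate_cons ha).1 hx)

theorem mem_listCone_rotate (hS : IsSimpleSeq χ Φ (a :: l)) (hx : x ∈ Φ)
    (hxl : x ∈ listCone 𝕜 (a :: l)) (hne : x ≠ a) :
    x ∈ listCone 𝕜 (Noncrossing.rotate χ (a :: l)) := by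
  have haΦ := hS.mem_root a List.mem_cons_self
  obtain ⟨ha, hal, hl⟩ := IsExceptional.cons_iff.1 (hS.isExceptional hR)
  have hspan : x ∈ listSpan 𝕜 (Noncrossing.rotate χ (a :: l)) := by
    rw [listSpan_rotate (hS.isExceptional hR).unit]
    exact mem_listSpan_of_mem_listCone hxl
  refine ((hS.rotate hR).mem_or_neg_mem x hx hspan).resolve_right fun hneg => hne ?_
  rw [mem_listCone_rotate_cons ha] at hneg
  obtain ⟨c, hc, y, hy, rfl⟩ := mem_listCone_cons.1 hxl
  obtain ⟨c', -, y', hy', hcy'⟩ := mem_listCone_cons.1 hneg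
  have hay : χ a y = 0 := map_eq_zero_of_mem_listSpan hal (mem_listSpan_of_mem_listCone hy)
  have hay' : χ a y' = 0 := map_eq_zero_of_mem_listSpan hal (mem_listSpan_of_mem_listCone hy')
  have hyy' : y + y' = (χ a (c • a + y) + χ (c • a + y) a - c - c') • a := by
    rw [map_neg, symmReflection_apply] at hcy'
    rw [← sub_eq_zero] at hcy' ⊢
    rw [← neg_eq_zero, ← hcy']
    module
  have hcoeff := congrArg (χ a) hyy'
  rw [map_add, hay, hay', map_smul, ha, smul_eq_mul, mul_one, add_zero] at hcoeff
  rw [← hcoeff, zero_smul] at hyy'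
  have hy0 := hl.eq_zero_of_add_eq_zero hy hy' hyy'
  exact hR.eq_of_eq_smul hx haΦ hc (by rw [hy0, add_zero])

theorem mem_listCone_of_rotate (hS : IsSimpleSeq χ Φ (a :: l)) (hx : x ∈ Φ)
    (hxl : x ∈ listCone 𝕜 (Noncrossing.rotate χ (a :: l))) (hne : x ≠ -a) :
    x ∈ listCone 𝕜 (a :: l) := by
  have haΦ := hS.mem_root a List.mem_cons_self
  have ha := hR.unit a haΦ
  rw [← symmReflection_symmReflection ha x, ← mem_listCone_rotate_cons ha]
  refine hS.mem_listCone_rotate hR (hR.symmReflection_mem a haΦ x hx)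
    ((mem_listCone_rotate_cons ha).1 hxl) fun h => hne ?_
  rw [← symmReflection_symmReflection ha x, h, symmReflection_self ha]

end IsSimpleSeq

end SimpleSequences

/-! ### Rotation and expansions -/

section Rotation

variable {𝕜 V : Type*} [Field 𝕜] [LinearOrder 𝕜] [IsStrictOrderedRing 𝕜] [AddCommGroup V]
  [Module 𝕜 V] {χ : LinearMap.BilinForm 𝕜 V} {Φ : Set V} {v x : V} {l : List V}

namespace IsSimpleSeq

variable (hR : IsRootSystem χ Φ) (hS : IsSimpleSeq χ Φ l)
include hR hS

theorem exists_isPeriodicPt_iterate_rotate :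
    ∃ i p, 0 < p ∧
      Function.IsPeriodicPt (Noncrossing.rotate χ) p ((Noncrossing.rotate χ)^[i] l) := by
  have := hR.finite.to_subtype
  have hfin : {m : List V | (∀ b ∈ m, b ∈ Φ) ∧ m.length = l.length}.Finite := by
    refine ((List.finite_length_eq Φ l.length).image (List.map (↑))).subset ?_
    rintro m ⟨hm, hlen⟩
    lift m to List Φ using hm
    exact ⟨m, by simpa using hlen, rfl⟩
  have hmem (i : ℕ) : (Noncrossing.rotate χ)^[i] l ∈
      {m : List V | (∀ b ∈ m, b ∈ Φ) ∧ m.length = l.length} := by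
    refine ⟨(hS.iterate_rotate hR i).mem_root, ?_⟩
    exact Function.Iterate.rec (fun m : List V => m.length = l.length) rfl
      (fun m hm => (length_rotate m).trans hm) i
  obtain ⟨i, -, j, -, hij, h⟩ := Set.infinite_univ.exists_lt_map_eq_of_mapsTo
    (fun i _ => hmem i) hfin
  refine ⟨i, j - i, Nat.sub_pos_of_lt hij, ?_⟩
  rw [Function.IsPeriodicPt, Function.IsFixedPt, ← Function.iterate_add_apply,
    Nat.sub_add_cancel hij.le, h]

theorem exists_iterate_rotate_eq_cons (hx : x ∈ Φ) (hxl : x ∈ listCone 𝕜 l) {j : ℕ}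
    (hj : x ∉ listCone 𝕜 ((Noncrossing.rotate χ)^[j] l)) :
    ∃ i t, (Noncrossing.rotate χ)^[i] l = x :: t := by
  induction j with
  | zero => exact absurd hxl hj
  | succ j ih =>
    by_cases hxj : x ∈ listCone 𝕜 ((Noncrossing.rotate χ)^[j] l)
    · rw [Function.iterate_succ_apply'] at hj
      have hSj := hS.iterate_rotate hR j
      generalize hm : (Noncrossing.rotate χ)^[j] l = m at hxj hj hSj
      cases m with
      | nil => exact absurd hxj hj
      | cons b m =>
        have hxb : x = b := by_contra fun h => hj (hSj.mem_listCone_rotate hR hx hxj h)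
        exact ⟨j, m, hxb ▸ hm⟩
    · exact ih hxj

/-- The rotations being periodic, each head `a` of a rotated sequence is followed by a later
head `-a`; a vector in all cones is then orthogonal to all heads, hence to the span. -/
theorem exists_notMem_listCone_iterate_rotate (hv : v ≠ 0) :
    ∃ j, v ∉ listCone 𝕜 ((Noncrossing.rotate χ)^[j] l) := by
  by_contra! hcone
  have hhead {i : ℕ} {a : V} {t : List V} (h : (Noncrossing.rotate χ)^[i] l = a :: t) :
      0 ≤ χ a v :=
    IsSimpleSeq.head_nonneg hR (h ▸ hS.iterate_rotate hR i) (h ▸ hcone i)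
  obtain ⟨n, p, hp, hper⟩ := hS.exists_isPeriodicPt_iterate_rotate hR
  set m := (Noncrossing.rotate χ)^[n] l with hm
  have hhead' (i : ℕ) (a : V) (t : List V) (h : (Noncrossing.rotate χ)^[i] m = a :: t) :
      χ a v = 0 := by
    have hSi : IsSimpleSeq χ Φ (a :: t) := h ▸ (hS.iterate_rotate hR n).iterate_rotate hR i
    have haΦ := hSi.mem_root a List.mem_cons_self
    have hneg : -a ∉ listCone 𝕜 (a :: t) := fun hmem => hR.ne_zero haΦ
      ((hSi.isExceptional hR).eq_zero_of_add_eq_zero (mem_listCone List.mem_cons_self) hmem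
        (add_neg_cancel a))
    have hpi : (Noncrossing.rotate χ)^[p - 1] (Noncrossing.rotate χ (a :: t)) = a :: t := by
      rw [← Function.iterate_succ_apply, Nat.succ_eq_add_one, Nat.sub_add_cancel hp, ← h]
      exact hper.apply_iterate i
    obtain ⟨k, t', hk⟩ := (hSi.rotate hR).exists_iterate_rotate_eq_cons hR (hR.neg_mem haΦ)
      (mem_listCone (by simp [rotate_cons])) (hpi.symm ▸ hneg)
    rw [← Function.iterate_succ_apply, ← h, hm, ← Function.iterate_add_apply,
      ← Function.iterate_add_apply] at hk
    rw [hm, ← Function.iterate_add_apply] at h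
    have hle := hhead hk
    rw [map_neg, LinearMap.neg_apply] at hle
    exact le_antisymm (neg_nonneg.1 hle) (hhead h)
  have hperp : ∀ b ∈ m, χ b v = 0 := by
    intro b hb
    obtain ⟨l₁, l₂, hl⟩ := List.append_of_mem hb
    rw [hl] at hhead'
    exact mem_of_forall_iterate_rotate_head (U := LinearMap.ker (χ.flip v)) hhead'
  exact hv (hR.eq_zero v (map_eq_zero_of_mem_listSpan (f := χ.flip v) hperp
    (mem_listSpan_of_mem_listCone (hcone n))))

/-- The roots in the cone are ordered by the number of rotations after which they leave it. -/
theorem exists_order : ∃ τ : V → ℕ, ∀ x ∈ Φ, ∀ y ∈ Φ, x ∈ listCone 𝕜 l → τ x ≤ τ y → x ≠ y →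
    χ y x ≤ 0 := by
  classical
  have hexit (x : Φ) := hS.exists_notMem_listCone_iterate_rotate hR (hR.ne_zero x.2)
  refine ⟨fun x => if hx : x ∈ Φ then Nat.find (hexit ⟨x, hx⟩) else 0, ?_⟩
  intro x hx y hy hxl hle hne
  simp only [hx, hy, dif_pos] at hle
  obtain ⟨k, hk⟩ : ∃ k, Nat.find (hexit ⟨x, hx⟩) = k + 1 :=
    Nat.exists_eq_succ_of_ne_zero fun h => (Nat.find_eq_zero _).1 h hxl
  have hx_exit := Nat.find_spec (hexit ⟨x, hx⟩)
  have hxk := not_not.1 (Nat.find_min (hexit ⟨x, hx⟩) (m := k) (by omega))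
  have hyk := not_not.1 (Nat.find_min (hexit ⟨y, hy⟩) (m := k) (by omega))
  rw [hk, Function.iterate_succ_apply'] at hx_exit
  have hSk := hS.iterate_rotate hR k
  generalize (Noncrossing.rotate χ)^[k] l = m at hx_exit hxk hyk hSk
  cases m with
  | nil => exact absurd hxk hx_exit
  | cons a m =>
    have hxa : x = a := by_contra fun h => hx_exit (hSk.mem_listCone_rotate hR hx hxk h)
    subst hxa
    exact hSk.apply_head_nonpos hR (hSk.mem_listCone_rotate hR hy hyk hne.symm)

end IsSimpleSeq

end Rotation

section Expansions

variable {𝕜 V : Type*} [Field 𝕜] [LinearOrder 𝕜] [IsStrictOrderedRing 𝕜] [AddCommGroup V]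
  [Module 𝕜 V]

/-- An expansion, along the sequence `L` of roots in the cone of `l`, of the vector with
coefficients `f`: these are positive on `L` and vanish elsewhere. The sequence `L` is exceptional,
with non-negative off-diagonal values of `χ`. -/
structure IsExpansion (χ : LinearMap.BilinForm 𝕜 V) (Φ : Set V) (l L : List V) (f : V →₀ 𝕜) :
    Prop where
  mem_root : ∀ x ∈ L, x ∈ Φ
  mem_cone : ∀ x ∈ L, x ∈ listCone 𝕜 l
  pairwise : L.Pairwise fun a b => χ a b = 0 ∧ 0 ≤ χ b a
  nonneg : ∀ x, 0 ≤ f x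
  mem_iff : ∀ x, x ∈ L ↔ 0 < f x

variable {χ : LinearMap.BilinForm 𝕜 V} {Φ : Set V} {a v x y : V} {l L L' : List V}
  {f g : V →₀ 𝕜} {c : 𝕜}

namespace IsExpansion

theorem apply_nonneg (hE : IsExpansion χ Φ l L f) (hx : x ∈ L) (hy : y ∈ L) (hne : x ≠ y) :
    0 ≤ χ x y := by
  have : Std.Symm fun a b : V => 0 ≤ χ a b ∧ 0 ≤ χ b a := ⟨fun _ _ h => h.symm⟩
  have hsymm : L.Pairwise fun a b => 0 ≤ χ a b ∧ 0 ≤ χ b a :=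
    hE.pairwise.imp fun h => ⟨h.1.ge, h.2⟩
  exact (hsymm.forall hx hy hne).1

theorem apply_linearCombination_pos (hR : IsRootSystem χ Φ) (hE : IsExpansion χ Φ l L f)
    (hx : x ∈ L) : 0 < χ x (Finsupp.linearCombination 𝕜 id f) := by
  have hpos := (hE.mem_iff x).1 hx
  rw [apply_linearCombination]
  refine Finset.sum_pos' (fun y hy => ?_) ⟨x, Finsupp.mem_support_iff.2 hpos.ne', ?_⟩
  · have hyL : y ∈ L :=
      (hE.mem_iff y).2 ((hE.nonneg y).lt_of_ne' (Finsupp.mem_support_iff.1 hy))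
    refine mul_nonneg (hE.nonneg y) ?_
    obtain rfl | hne := eq_or_ne x y
    · exact (hR.unit x (hE.mem_root x hx)).symm ▸ zero_le_one
    · exact hE.apply_nonneg hx hyL hne
  · rwa [hR.unit x (hE.mem_root x hx), mul_one]

theorem of_rotate (hR : IsRootSystem χ Φ) (hS : IsSimpleSeq χ Φ (a :: l))
    (hE : IsExpansion χ Φ (rotate χ (a :: l)) L f)
    (hf : Finsupp.linearCombination 𝕜 id f ∈ listCone 𝕜 (a :: l)) :
    IsExpansion χ Φ (a :: l) L f where
  __ := hE
  mem_cone x hx := by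
    refine hS.mem_listCone_of_rotate hR (hE.mem_root x hx) (hE.mem_cone x hx) ?_
    rintro rfl
    have hneg := hE.apply_linearCombination_pos hR hx
    rw [map_neg, LinearMap.neg_apply, neg_pos] at hneg
    exact hneg.not_ge (hS.head_nonneg hR hf)

theorem snoc (hR : IsRootSystem χ Φ) (hS : IsSimpleSeq χ Φ (a :: l))
    (hE : IsExpansion χ Φ (l.map (symmReflection χ a)) L f) (hc : 0 < c) :
    IsExpansion χ Φ (a :: l) (L ++ [a]) (f + Finsupp.single a c) := by
  have haΦ := hS.mem_root a List.mem_cons_self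
  have hperp {x : V} (hx : x ∈ L) : χ x a = 0 := hS.apply_eq_zero_of_mem_listSpan_map hR
    (mem_listSpan_of_mem_listCone (hE.mem_cone x hx))
  have hcone {x : V} (hx : x ∈ L) : x ∈ listCone 𝕜 (a :: l) := by
    refine hS.mem_listCone_of_rotate hR (hE.mem_root x hx)
      (listCone_mono (List.subset_append_left _ _) (hE.mem_cone x hx)) ?_
    rintro rfl
    simpa [hR.unit a haΦ] using hperp hx
  exact {
    mem_root := by simpa [or_imp, forall_and] using ⟨hE.mem_root, haΦ⟩
    mem_cone := by
      simpa [or_imp, forall_and] using ⟨fun _ => hcone, mem_listCone (𝕜 := 𝕜) List.mem_cons_self⟩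
    pairwise := List.pairwise_append.2 ⟨hE.pairwise, List.pairwise_singleton _ _, by
      simpa using fun x hx => ⟨hperp hx, hS.head_nonneg hR (hcone hx)⟩⟩
    nonneg := fun x => add_nonneg (hE.nonneg x) (Finsupp.single_nonneg.2 hc.le x)
    mem_iff := fun x => by
      obtain rfl | hne := eq_or_ne x a
      · simpa using add_pos_of_nonneg_of_pos (hE.nonneg x) hc
      · simp [hne, hE.mem_iff, Finsupp.single_eq_of_ne hne] }

end IsExpansion

theorem IsSimpleSeq.exists_eq_add_smul_of_notMem_rotate (hR : IsRootSystem χ Φ)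
    (hS : IsSimpleSeq χ Φ (a :: l)) (hv : v ∈ listCone 𝕜 (a :: l))
    (hvr : v ∉ listCone 𝕜 (Noncrossing.rotate χ (a :: l))) :
    ∃ y ∈ listCone 𝕜 (l.map (symmReflection χ a)), ∃ c : 𝕜, 0 < c ∧ v = y + c • a := by
  have ha := hR.unit a (hS.mem_root a List.mem_cons_self)
  obtain ⟨c, -, y, hy, rfl⟩ := mem_listCone_cons.1 hv
  have hrefl : symmReflection χ a (c • a + y) = -(c + χ a y + χ y a) • a + y := by
    rw [map_add, map_smul, symmReflection_self ha, symmReflection_apply]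
    module
  refine ⟨symmReflection χ a y, by rw [listCone_map]; exact ⟨y, hy, rfl⟩, c + χ a y + χ y a, ?_, ?_⟩
  · by_contra! hle
    refine hvr ((mem_listCone_rotate_cons ha).2 ?_)
    exact hrefl ▸ mem_listCone_cons.2 ⟨_, neg_nonneg.2 hle, y, hy, rfl⟩
  · rw [symmReflection_apply]
    module

/-- By induction on the length of `l` and on the number of rotations after which `v` leaves the
cone. -/
theorem IsSimpleSeq.exists_isExpansion (hR : IsRootSystem χ Φ) (hS : IsSimpleSeq χ Φ l)
    (hv : v ∈ listCone 𝕜 l) :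
    ∃ L f, IsExpansion χ Φ l L f ∧ Finsupp.linearCombination 𝕜 id f = v := by
  induction hn : l.length generalizing l v with
  | zero =>
    have hv0 : v = 0 := by
      rw [List.length_eq_zero_iff.1 hn] at hv
      simpa [listCone, PointedCone.hull] using hv
    exact ⟨[], 0, ⟨by simp, by simp, .nil, by simp, by simp⟩, by simp [hv0]⟩
  | succ n ih =>
    obtain rfl | hv0 := eq_or_ne v 0
    · exact ⟨[], 0, ⟨by simp, by simp, .nil, by simp, by simp⟩, by simp⟩
    obtain ⟨j, hj⟩ := hS.exists_notMem_listCone_iterate_rotate hR hv0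
    induction j generalizing l with
    | zero => exact absurd hv hj
    | succ j ihj =>
      obtain _ | ⟨a, l⟩ := l
      · simp at hn
      by_cases hvr : v ∈ listCone 𝕜 (Noncrossing.rotate χ (a :: l))
      · obtain ⟨L, f, hE, hf⟩ :=
          ihj (hS.rotate hR) hvr ((length_rotate _).trans hn) hj
        exact ⟨L, f, hE.of_rotate hR hS (hf ▸ hv), hf⟩
      · obtain ⟨y, hy, c, hc, rfl⟩ := hS.exists_eq_add_smul_of_notMem_rotate hR hv hvr
        obtain ⟨L, f, hE, rfl⟩ := ih (hS.map_tail hR) hy (by simpa using hn)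
        exact ⟨L ++ [a], f + Finsupp.single a c, hE.snoc hR hS hc, by simp⟩

namespace IsExpansion

theorem apply_le_of_isMax (hR : IsRootSystem χ Φ) {τ : V → ℕ}
    (hτ : ∀ x ∈ Φ, ∀ y ∈ Φ, x ∈ listCone 𝕜 l → τ x ≤ τ y → x ≠ y → χ y x ≤ 0)
    (hE : IsExpansion χ Φ l L f) (hE' : IsExpansion χ Φ l L' g)
    (hfg : Finsupp.linearCombination 𝕜 id f = Finsupp.linearCombination 𝕜 id g)
    (hmax : ∀ y, f y ≠ g y → τ y ≤ τ x) : f x ≤ g x := by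
  by_contra! hlt
  have hxL : x ∈ L := (hE.mem_iff x).2 ((hE'.nonneg x).trans_lt hlt)
  have hxΦ := hE.mem_root x hxL
  have hsum : ∑ y ∈ (f - g).support, (f - g) y * χ x y = 0 := by
    rw [← apply_linearCombination, map_sub, hfg, sub_self, map_zero]
  refine (Finset.sum_pos' (fun y hy => ?_) ⟨x, ?_, ?_⟩).ne' hsum
  · have hne : f y ≠ g y := by simpa [sub_eq_zero] using hy
    rw [Finsupp.sub_apply]
    obtain rfl | hyx := eq_or_ne y x
    · exact mul_nonneg (sub_nonneg.2 hlt.le) (hR.unit y hxΦ ▸ zero_le_one)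
    by_cases hyL : y ∈ L
    · have h := hτ y (hE.mem_root y hyL) x hxΦ (hE.mem_cone y hyL) (hmax y hne) hyx
      rw [h.antisymm (hE.apply_nonneg hxL hyL hyx.symm), mul_zero]
    · have hfy : f y = 0 := (not_lt.1 ((hE.mem_iff y).not.1 hyL)).antisymm (hE.nonneg y)
      have hyL' : y ∈ L' := (hE'.mem_iff y).2 ((hE'.nonneg y).lt_of_ne (hfy ▸ hne))
      have h := hτ y (hE'.mem_root y hyL') x hxΦ (hE'.mem_cone y hyL') (hmax y hne) hyx
      exact mul_nonneg_of_nonpos_of_nonpos (by simpa [hfy] using hE'.nonneg y) h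
  · simpa [sub_eq_zero] using hlt.ne'
  · simpa [hR.unit x hxΦ] using hlt

/-- Compare the coefficients at the last root, in the order of `IsSimpleSeq.exists_order`, where
they differ. -/
theorem unique (hR : IsRootSystem χ Φ) (hS : IsSimpleSeq χ Φ l) (hE : IsExpansion χ Φ l L f)
    (hE' : IsExpansion χ Φ l L' g)
    (hfg : Finsupp.linearCombination 𝕜 id f = Finsupp.linearCombination 𝕜 id g) : f = g := by
  obtain ⟨τ, hτ⟩ := hS.exists_order hR
  by_contra hne
  obtain ⟨x, hx, hmax⟩ := (f - g).support.exists_max_image τ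
    (by simpa [sub_eq_zero] using hne)
  simp only [Finsupp.mem_support_iff, Finsupp.sub_apply, sub_ne_zero] at hx hmax
  exact hx ((hE.apply_le_of_isMax hR hτ hE' hfg hmax).antisymm
    (hE'.apply_le_of_isMax hR hτ hE hfg.symm fun y hy => hmax y hy.symm))

end IsExpansion

end Expansions

section Orthogonals

variable {𝕜 V : Type*} [CommRing 𝕜] [AddCommGroup V] [Module 𝕜 V]
  {χ : LinearMap.BilinForm 𝕜 V} {a x y : V} {l l' : List V}

theorem mem_orthogonal_listSpan :
    y ∈ χ.orthogonal (listSpan 𝕜 l) ↔ ∀ x ∈ l, χ x y = 0 :=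
  ⟨fun h x hx => h x (mem_listSpan hx),
    fun h _ hx => map_eq_zero_of_mem_listSpan (f := χ.flip y) h hx⟩

theorem reflectionProd_apply_of_orthogonal (hx : ∀ y ∈ l, χ y x + χ x y = 0) :
    reflectionProd χ l x = x := by
  induction l with
  | nil => simp [reflectionProd_nil]
  | cons a l ih =>
    rw [List.forall_mem_cons] at hx
    rw [reflectionProd_cons, Module.End.mul_apply, ih hx.2, symmReflection_apply, hx.1, zero_smul,
      sub_zero]

theorem perm_neg_cons_map {z : V} (hz : χ z z = 1) (l₁ l₂ : List V) :
    (-z :: (l₁ ++ l₂).map (symmReflection χ z)).Perm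
      ((l₁ ++ z :: l₂).map (symmReflection χ z)) := by
  rw [← symmReflection_self hz, ← List.map_cons]
  exact List.perm_middle.symm.map _

namespace IsExceptional

theorem mem_listSpan_of_left_orthogonal (hχ : ∀ x, χ x x = 0 → x = 0)
    (he : IsExceptional χ (l ++ l')) (hx : x ∈ listSpan 𝕜 (l ++ l'))
    (h : ∀ y ∈ l', χ x y = 0) : x ∈ listSpan 𝕜 l := by
  rw [listSpan_append] at hx
  obtain ⟨s, hs, r, hr, rfl⟩ := Submodule.mem_sup.1 hx
  have hsl' (y : V) (hy : y ∈ l') : χ s y = 0 :=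
    map_eq_zero_of_mem_listSpan (f := χ.flip y) (fun b hb => (append_iff.1 he).2.2 b hb y hy) hs
  have hrl' (y : V) (hy : y ∈ l') : χ r y = 0 := by
    simpa [hsl' y hy] using h y hy
  rwa [hχ r (map_eq_zero_of_mem_listSpan hrl' hr), add_zero]

/-- An analogue of Serre duality, with the product of the reflections as Serre functor up to
sign. -/
theorem apply_reflectionProd (he : IsExceptional χ l) (htop : listSpan 𝕜 l = ⊤) (x y : V) :
    χ (reflectionProd χ l x) y = -χ y x := by
  have h := he.apply_sub_reflectionProd x (y := y) (htop ▸ Submodule.mem_top)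
  rw [map_sub, LinearMap.sub_apply] at h
  linear_combination -h

theorem map_reflectionProd (he : IsExceptional χ l) (htop : listSpan 𝕜 l = ⊤)
    (he' : IsExceptional χ l') : IsExceptional χ (l'.map (reflectionProd χ l)) where
  unit := by simpa [he.apply_reflectionProd htop] using he'.unit
  pairwise := by simpa [List.pairwise_map, he.apply_reflectionProd htop] using he'.pairwise

end IsExceptional

end Orthogonals

section SimpleOrthogonals

variable {𝕜 V : Type*} [Field 𝕜] [LinearOrder 𝕜] [IsStrictOrderedRing 𝕜] [AddCommGroup V]
  [Module 𝕜 V] {χ : LinearMap.BilinForm 𝕜 V} {Φ : Set V} {z m : V} {l l₁ l₂ L : List V}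

namespace IsSimpleSeq

variable (hR : IsRootSystem χ Φ)
include hR

theorem neg_cons_map (hS : IsSimpleSeq χ Φ (l₁ ++ z :: l₂)) (h : ∀ b ∈ l₂, 0 ≤ χ b z) :
    IsSimpleSeq χ Φ (-z :: (l₁ ++ l₂).map (symmReflection χ z)) := by
  have hzmem : z ∈ l₁ ++ z :: l₂ := by simp
  have hz := hR.unit z (hS.mem_root z hzmem)
  have hpw := List.pairwise_append.1 hS.pairwise
  have hbz (b : V) (hb : b ∈ l₁ ++ l₂) : χ b z = 0 ∧ χ z b ≤ 0 := by
    rcases List.mem_append.1 hb with hb | hb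
    · exact hpw.2.2 b hb z List.mem_cons_self
    · have hzb := (List.pairwise_cons.1 hpw.2.1).1 b hb
      exact ⟨hzb.2.antisymm (h b hb), hzb.1.le⟩
  refine hS.map_symmReflection hR hzmem (perm_neg_cons_map hz l₁ l₂)
    (List.pairwise_cons.2 ⟨List.forall_mem_map.2 fun b hb => ?_, List.pairwise_map.2 ?_⟩)
  · simpa [apply_self_symmReflection hz, apply_symmReflection_self hz] using hbz b hb
  · have hsub : (l₁ ++ l₂).Sublist (l₁ ++ z :: l₂) :=
      List.Sublist.append_left (List.sublist_cons_self z l₂) l₁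
    refine (hS.pairwise.sublist hsub).imp_of_mem fun {b c} hb hc hbc => ?_
    rwa [apply_symmReflection_of_right_orthogonal hz (hbz b hb).1 (hbz c hc).1,
      apply_symmReflection_of_right_orthogonal hz (hbz c hc).1 (hbz b hb).1]

/-- By induction on the number of rotations after which `m` leaves the cone; when a rotation is
undone, at most one root becomes negative, and this is corrected by a reflection. -/
theorem exists_listSpan_eq_inf_ker (hS : IsSimpleSeq χ Φ l) (hm : m ∈ Φ)
    (hml : m ∈ listCone 𝕜 l) : ∃ l', IsSimpleSeq χ Φ l' ∧ (∀ x ∈ l', x ∈ listCone 𝕜 l) ∧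
      listSpan 𝕜 l' = listSpan 𝕜 l ⊓ LinearMap.ker (χ m) := by
  obtain ⟨j, hj⟩ := hS.exists_notMem_listCone_iterate_rotate hR (hR.ne_zero hm)
  induction j generalizing l with
  | zero => exact absurd hml hj
  | succ j ih =>
    obtain _ | ⟨a, l⟩ := l
    · exact absurd (by simpa [listCone, PointedCone.hull] using hml) (hR.ne_zero hm)
    obtain ⟨ha, hal, -⟩ := IsExceptional.cons_iff.1 (hS.isExceptional hR)
    obtain rfl | hma := eq_or_ne m a
    · refine ⟨l, hS.tail hR, fun x hx => mem_listCone (List.mem_cons_of_mem m hx), ?_⟩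
      refine le_antisymm (le_inf (listSpan_mono (List.subset_cons_self m l))
        (listSpan_le.2 hal)) fun x hx => mem_listSpan_of_mem_cons hal ha hx.1 hx.2
    obtain ⟨l', hS', hcone, hspan⟩ := ih (hS.rotate hR) (hS.mem_listCone_rotate hR hm hml hma) hj
    rw [listSpan_rotate (hS.isExceptional hR).unit] at hspan
    by_cases hneg : -a ∈ l'
    · obtain ⟨l₁, l₂, rfl⟩ := List.append_of_mem hneg
      have ha' : χ (-a) (-a) = 1 := by simpa using ha
      have hperm := perm_neg_cons_map ha' l₁ l₂
      refine ⟨_, hS'.neg_cons_map hR fun b hb => ?_, fun x hx => ?_, ?_⟩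
      · simpa using hS.apply_head_nonpos hR (hcone b (by simp [hb]))
      · obtain ⟨b, hb, rfl⟩ := List.mem_map.1 (hperm.subset hx)
        rw [symmReflection_neg]
        exact (mem_listCone_rotate_cons ha).1 (hcone b hb)
      · rw [listSpan_perm hperm, listSpan_map,
          Noncrossing.map_symmReflection ha' (mem_listSpan hneg), hspan]
    · exact ⟨l', hS', fun x hx => hS.mem_listCone_of_rotate hR (hS'.mem_root x hx) (hcone x hx)
        fun h => hneg (h ▸ hx), hspan⟩

theorem exists_listSpan_eq_inf_orthogonal (hS : IsSimpleSeq χ Φ l) (hL : ∀ x ∈ L, x ∈ Φ)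
    (he : IsExceptional χ L) (hLl : listSpan 𝕜 L ≤ listSpan 𝕜 l) :
    ∃ l', IsSimpleSeq χ Φ l' ∧ (∀ x ∈ l', x ∈ listCone 𝕜 l) ∧
      listSpan 𝕜 l' = listSpan 𝕜 l ⊓ χ.orthogonal (listSpan 𝕜 L) := by
  induction L generalizing l with
  | nil =>
    refine ⟨l, hS, fun x hx => mem_listCone hx, (inf_of_le_left fun x _ => ?_).symm⟩
    exact mem_orthogonal_listSpan.2 (by simp)
  | cons m L ih =>
    rw [List.forall_mem_cons] at hL
    obtain ⟨-, hmL, heL⟩ := IsExceptional.cons_iff.1 he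
    obtain ⟨hml, hLl⟩ := List.forall_mem_cons.1 (listSpan_le.1 hLl)
    obtain ⟨l₁, hS₁, hcone₁, hspan₁⟩ : ∃ l', IsSimpleSeq χ Φ l' ∧
        (∀ x ∈ l', x ∈ listCone 𝕜 l) ∧ listSpan 𝕜 l' = listSpan 𝕜 l ⊓ LinearMap.ker (χ m) := by
      rcases hS.mem_or_neg_mem m hL.1 hml with h | h
      · exact hS.exists_listSpan_eq_inf_ker hR hL.1 h
      · simpa [LinearMap.ker_neg] using hS.exists_listSpan_eq_inf_ker hR (hR.neg_mem hL.1) h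
    obtain ⟨l', hS', hcone, hspan⟩ :=
      ih hS₁ hL.2 heL (hspan₁ ▸ le_inf (listSpan_le.2 hLl) (listSpan_le.2 hmL))
    refine ⟨l', hS', fun x hx => listCone_le.2 hcone₁ (hcone x hx), ?_⟩
    ext y
    simp only [hspan, hspan₁, Submodule.mem_inf, LinearMap.mem_ker, mem_orthogonal_listSpan,
      List.forall_mem_cons, and_assoc]

theorem exists_isExceptional_append (hS : IsSimpleSeq χ Φ l) (hL : ∀ x ∈ L, x ∈ Φ)
    (he : IsExceptional χ L) (hLl : listSpan 𝕜 L ≤ listSpan 𝕜 l) :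
    ∃ K, (∀ x ∈ K, x ∈ Φ) ∧ IsExceptional χ (L ++ K) ∧ listSpan 𝕜 (L ++ K) = listSpan 𝕜 l := by
  obtain ⟨K, hK, -, hspan⟩ := hS.exists_listSpan_eq_inf_orthogonal hR hL he hLl
  refine ⟨K, hK.mem_root, IsExceptional.append_iff.2 ⟨he, hK.isExceptional hR, ?_⟩, ?_⟩
  · exact fun x hx y hy => mem_orthogonal_listSpan.1 (hspan.le (mem_listSpan hy)).2 x hx
  · rw [listSpan_append, hspan, inf_comm, ← sup_inf_assoc_of_le _ hLl, he.listSpan_sup_orthogonal,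
      top_inf_eq]

/-- The span of `L` is the left orthogonal of a completion `K`, hence, by
`IsExceptional.apply_reflectionProd`, the right orthogonal of a transform of `K`. -/
theorem exists_listSpan_eq (hS : IsSimpleSeq χ Φ l) (htop : listSpan 𝕜 l = ⊤)
    (hL : ∀ x ∈ L, x ∈ Φ) (he : IsExceptional χ L) :
    ∃ l', IsSimpleSeq χ Φ l' ∧ (∀ x ∈ l', x ∈ listCone 𝕜 l) ∧ listSpan 𝕜 l' = listSpan 𝕜 L := by
  have hel := hS.isExceptional hR
  obtain ⟨K, hK, hLK, hspan⟩ := hS.exists_isExceptional_append hR hL he (htop ▸ le_top)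
  obtain ⟨-, heK, hortho⟩ := IsExceptional.append_iff.1 hLK
  obtain ⟨l', hS', hcone, hspan'⟩ := hS.exists_listSpan_eq_inf_orthogonal hR
    (L := K.map (reflectionProd χ l))
    (List.forall_mem_map.2 fun x hx => hR.reflectionProd_mem hS.mem_root (hK x hx))
    (hel.map_reflectionProd htop heK) (htop ▸ le_top)
  refine ⟨l', hS', hcone, ?_⟩
  ext y
  rw [hspan', htop, top_inf_eq, mem_orthogonal_listSpan]
  simp only [List.forall_mem_map, hel.apply_reflectionProd htop, neg_eq_zero]
  constructor
  · exact hLK.mem_listSpan_of_left_orthogonal hR.eq_zero (by rw [hspan, htop]; trivial)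
  · exact fun hy z hz =>
      map_eq_zero_of_mem_listSpan (f := χ.flip z) (fun b hb => hortho b hb z hz) hy

end IsSimpleSeq

end SimpleOrthogonals

/-! ### Exceptional subspaces -/

section ExceptionalSubspace

variable {𝕜 V : Type*} [Field 𝕜] [LinearOrder 𝕜] [AddCommGroup V] [Module 𝕜 V]
  {χ : LinearMap.BilinForm 𝕜 V} {Φ : Set V}

/-- The subspaces spanned by the exceptional sequences of roots. They are the moved spaces of the
elements below the product of the reflections of an exceptional sequence spanning `V`. -/
def IsExceptionalSubspace (χ : LinearMap.BilinForm 𝕜 V) (Φ : Set V) (U : Submodule 𝕜 V) : Prop :=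
  ∃ L : List V, (∀ x ∈ L, x ∈ Φ) ∧ IsExceptional χ L ∧ listSpan 𝕜 L = U

theorem IsRootSystem.finite_isExceptionalSubspace (hR : IsRootSystem χ Φ) :
    {U | IsExceptionalSubspace χ Φ U}.Finite := by
  refine (hR.finite.finite_subsets.image (Submodule.span 𝕜)).subset ?_
  rintro _ ⟨L, hL, -, rfl⟩
  exact ⟨{x | x ∈ L}, hL, rfl⟩

end ExceptionalSubspace

section Meet

variable {𝕜 V : Type*} [Field 𝕜] [LinearOrder 𝕜] [IsStrictOrderedRing 𝕜] [AddCommGroup V]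
  [Module 𝕜 V]

/-- If `b` lies outside `U`, then among the vectors `a + t • b` at most one lies in `U`, and
two of the others lie in the same other subspace. -/
theorem exists_forall_mem_of_forall_exists_mem (C : PointedCone 𝕜 V) {𝒰 : Set (Submodule 𝕜 V)}
    (h𝒰 : 𝒰.Finite) (hC : ∀ x ∈ C, ∃ U ∈ 𝒰, x ∈ U) : ∃ U ∈ 𝒰, ∀ x ∈ C, x ∈ U := by
  induction 𝒰, h𝒰 using Set.Finite.induction_on with
  | empty => simpa using hC 0 C.zero_mem
  | @insert U 𝒰 _ h𝒰 ih =>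
    by_cases hCU : ∀ x ∈ C, x ∈ U
    · exact ⟨U, Set.mem_insert U 𝒰, hCU⟩
    push Not at hCU
    obtain ⟨b, hbC, hbU⟩ := hCU
    suffices ∀ a ∈ C, ∃ U' ∈ 𝒰, a ∈ U' by
      obtain ⟨U', hU', h⟩ := ih this
      exact ⟨U', Set.mem_insert_of_mem U hU', h⟩
    intro a ha
    have hline (t : ℕ) : a + (t : 𝕜) • b ∈ C :=
      add_mem ha (C.smul_mem t.cast_nonneg hbC)
    have hsub {U' : Submodule 𝕜 V} {s t : ℕ} (hst : s ≠ t) (hs : a + (s : 𝕜) • b ∈ U')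
        (ht : a + (t : 𝕜) • b ∈ U') : b ∈ U' := by
      have := U'.sub_mem hs ht
      rw [add_sub_add_left_eq_sub, ← sub_smul] at this
      exact (U'.smul_mem_iff (sub_ne_zero.2 (Nat.cast_injective.ne hst))).1 this
    have hfin : {t : ℕ | a + (t : 𝕜) • b ∈ U}.Finite :=
      Set.Subsingleton.finite fun s hs t ht => by_contra fun hst => hbU (hsub hst hs ht)
    have hmem (t : ℕ) (ht : t ∈ {t : ℕ | a + (t : 𝕜) • b ∈ U}ᶜ) :
        ∃ U' ∈ 𝒰, a + (t : 𝕜) • b ∈ U' :=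
      (Set.exists_mem_insert.1 (hC _ (hline t))).resolve_left ht
    choose! F hF𝒰 hF using hmem
    obtain ⟨s, hs, t, ht, hst, hFst⟩ :=
      hfin.infinite_compl.exists_ne_map_eq_of_mapsTo (fun t ht => hF𝒰 t ht) h𝒰
    have hb := hsub hst (hF s hs) (hFst ▸ hF t ht)
    exact ⟨F s, hF𝒰 s hs, by simpa using (F s).sub_mem (hF s hs) ((F s).smul_mem (s : 𝕜) hb)⟩

variable {χ : LinearMap.BilinForm 𝕜 V} {Φ : Set V} {v x : V} {l l₁ l₂ L : List V} {f : V →₀ 𝕜}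
  {U₁ U₂ : Submodule 𝕜 V}

namespace IsExpansion

theorem mono (hE : IsExpansion χ Φ l₁ L f) (h : ∀ x ∈ l₁, x ∈ listCone 𝕜 l) :
    IsExpansion χ Φ l L f where
  __ := hE
  mem_cone x hx := listCone_le.2 h (hE.mem_cone x hx)

theorem isExceptionalSubspace (hR : IsRootSystem χ Φ) (hE : IsExpansion χ Φ l L f) :
    IsExceptionalSubspace χ Φ (listSpan 𝕜 L) :=
  ⟨L, hE.mem_root, ⟨fun x hx => hR.unit x (hE.mem_root x hx), hE.pairwise.imp fun h => h.1⟩, rfl⟩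

theorem linearCombination_mem (hE : IsExpansion χ Φ l L f) :
    Finsupp.linearCombination 𝕜 id f ∈ listSpan 𝕜 L := by
  refine Submodule.sum_mem _ fun x hx => Submodule.smul_mem _ _ (mem_listSpan ?_)
  exact (hE.mem_iff x).2 ((hE.nonneg x).lt_of_ne' (Finsupp.mem_support_iff.1 hx))

end IsExpansion

namespace IsSimpleSeq

theorem mem_listCone_of_mem_listSpan (hR : IsRootSystem χ Φ) (hS : IsSimpleSeq χ Φ l)
    (hS₁ : IsSimpleSeq χ Φ l₁) (h₁ : ∀ x ∈ l₁, x ∈ listCone 𝕜 l) (hx : x ∈ Φ)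
    (hxl : x ∈ listCone 𝕜 l) (hx₁ : x ∈ listSpan 𝕜 l₁) : x ∈ listCone 𝕜 l₁ :=
  (hS₁.mem_or_neg_mem x hx hx₁).resolve_right fun h => hR.ne_zero hx <|
    (hS.isExceptional hR).eq_zero_of_add_eq_zero hxl (listCone_le.2 h₁ h) (add_neg_cancel x)

/-- The expansions of `v` in the two cones agree, by uniqueness of expansions in the cone
of `l`. -/
theorem exists_isExceptionalSubspace_mem (hR : IsRootSystem χ Φ) (hS : IsSimpleSeq χ Φ l)
    (hS₁ : IsSimpleSeq χ Φ l₁) (hS₂ : IsSimpleSeq χ Φ l₂) (h₁ : ∀ x ∈ l₁, x ∈ listCone 𝕜 l)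
    (h₂ : ∀ x ∈ l₂, x ∈ listCone 𝕜 l) (hv₁ : v ∈ listCone 𝕜 l₁) (hv₂ : v ∈ listCone 𝕜 l₂) :
    ∃ U, IsExceptionalSubspace χ Φ U ∧ U ≤ listSpan 𝕜 l₁ ∧ U ≤ listSpan 𝕜 l₂ ∧ v ∈ U := by
  obtain ⟨L₁, f₁, hE₁, rfl⟩ := hS₁.exists_isExpansion hR hv₁
  obtain ⟨L₂, f₂, hE₂, hf₂⟩ := hS₂.exists_isExpansion hR hv₂
  obtain rfl := (hE₁.mono h₁).unique hR hS (hE₂.mono h₂) hf₂.symm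
  refine ⟨listSpan 𝕜 L₁, hE₁.isExceptionalSubspace hR, listSpan_le.2 fun x hx => ?_,
    listSpan_le.2 fun x hx => ?_, hE₁.linearCombination_mem⟩
  · exact mem_listSpan_of_mem_listCone (hE₁.mem_cone x hx)
  · exact mem_listSpan_of_mem_listCone (hE₂.mem_cone x ((hE₂.mem_iff x).2 ((hE₁.mem_iff x).1 hx)))

theorem exists_isExceptionalSubspace_le_le (hR : IsRootSystem χ Φ) (hS : IsSimpleSeq χ Φ l)
    (htop : listSpan 𝕜 l = ⊤) (hU₁ : IsExceptionalSubspace χ Φ U₁)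
    (hU₂ : IsExceptionalSubspace χ Φ U₂) :
    ∃ U, IsExceptionalSubspace χ Φ U ∧ U ≤ U₁ ∧ U ≤ U₂ ∧ ∀ x ∈ Φ, x ∈ U₁ → x ∈ U₂ → x ∈ U := by
  obtain ⟨L₁, hL₁, he₁, rfl⟩ := hU₁
  obtain ⟨L₂, hL₂, he₂, rfl⟩ := hU₂
  obtain ⟨l₁, hS₁, hc₁, hs₁⟩ := hS.exists_listSpan_eq hR htop hL₁ he₁
  obtain ⟨l₂, hS₂, hc₂, hs₂⟩ := hS.exists_listSpan_eq hR htop hL₂ he₂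
  rw [← hs₁, ← hs₂]
  obtain ⟨U, ⟨hU, hU₁, hU₂⟩, hUC⟩ := exists_forall_mem_of_forall_exists_mem
    (listCone 𝕜 l₁ ⊓ listCone 𝕜 l₂)
    (𝒰 := {U | IsExceptionalSubspace χ Φ U ∧ U ≤ listSpan 𝕜 l₁ ∧ U ≤ listSpan 𝕜 l₂})
    (hR.finite_isExceptionalSubspace.subset fun U hU => hU.1) fun v hv => by
      simpa only [Set.mem_ofPred_eq, and_assoc] using
        hS.exists_isExceptionalSubspace_mem hR hS₁ hS₂ hc₁ hc₂ hv.1 hv.2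
  have hpos {x : V} (hx : x ∈ Φ) (hxl : x ∈ listCone 𝕜 l) (hx₁ : x ∈ listSpan 𝕜 l₁)
      (hx₂ : x ∈ listSpan 𝕜 l₂) : x ∈ U :=
    hUC x ⟨hS.mem_listCone_of_mem_listSpan hR hS₁ hc₁ hx hxl hx₁,
      hS.mem_listCone_of_mem_listSpan hR hS₂ hc₂ hx hxl hx₂⟩
  refine ⟨U, hU, hU₁, hU₂, fun x hx hx₁ hx₂ => ?_⟩
  rcases hS.mem_or_neg_mem x hx (htop ▸ Submodule.mem_top) with h | h
  · exact hpos hx h hx₁ hx₂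
  · exact U.neg_mem_iff.1 (hpos (hR.neg_mem hx) h (neg_mem hx₁) (neg_mem hx₂))

end IsSimpleSeq

end Meet

section Factorisation

section

variable {𝕜 V : Type*} [Field 𝕜] [AddCommGroup V] [Module 𝕜 V]
  {χ : LinearMap.BilinForm 𝕜 V} {x y : V} {l L L₁ L₂ : List V}

theorem finrank_listSpan_le (L : List V) : Module.finrank 𝕜 (listSpan 𝕜 L) ≤ L.length := by
  classical
  rw [listSpan, ← List.coe_toFinset]
  exact (finrank_span_finset_le_card _).trans (List.toFinset_card_le L)

theorem finiteDimensional_of_listSpan_eq_top (h : listSpan 𝕜 l = ⊤) : FiniteDimensional 𝕜 V := by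
  classical
  exact ⟨l.toFinset, by rwa [List.coe_toFinset]⟩

namespace IsExceptional

theorem notMem_listSpan (he : IsExceptional χ (x :: l)) : x ∉ listSpan 𝕜 l := by
  obtain ⟨hx, hxl, -⟩ := cons_iff.1 he
  exact fun h => one_ne_zero (hx.symm.trans (map_eq_zero_of_mem_listSpan hxl h))

theorem nodup (he : IsExceptional χ l) : l.Nodup := by
  refine he.pairwise.imp_of_mem fun {a b} ha _ hab => ?_
  rintro rfl
  exact one_ne_zero ((he.unit a ha).symm.trans hab)

theorem linearIndepOn (he : IsExceptional χ l) : LinearIndepOn 𝕜 id {x | x ∈ l} := by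
  induction l with
  | nil => simp
  | cons x l ih =>
    have hset : {y | y ∈ x :: l} = insert x {y | y ∈ l} := by ext; simp
    exact hset ▸ (ih (cons_iff.1 he).2.2).id_insert he.notMem_listSpan

theorem finrank_listSpan (he : IsExceptional χ l) :
    Module.finrank 𝕜 (listSpan 𝕜 l) = l.length := by
  classical
  have hli := he.linearIndepOn
  rw [← List.coe_toFinset] at hli
  rw [listSpan, ← List.coe_toFinset, finrank_span_finset_eq_card hli,
    List.toFinset_card_of_nodup he.nodup]

theorem length_eq (he : IsExceptional χ l) (he' : IsExceptional χ L)
    (h : listSpan 𝕜 l = listSpan 𝕜 L) : l.length = L.length := by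
  rw [← he.finrank_listSpan, h, he'.finrank_listSpan]

theorem finrank_eq_length (he : IsExceptional χ l) (htop : listSpan 𝕜 l = ⊤) :
    Module.finrank 𝕜 V = l.length := by
  rw [← he.finrank_listSpan, htop, finrank_top]

variable [NeZero (2 : 𝕜)]

theorem sub_reflectionProd_injective (hχ : ∀ x, χ x x = 0 → x = 0) (he : IsExceptional χ l)
    (htop : listSpan 𝕜 l = ⊤) : Function.Injective (1 - reflectionProd χ l : Module.End 𝕜 V) := by
  refine LinearMap.ker_eq_bot.1 (LinearMap.ker_eq_bot'.2 fun x hx => hχ x ?_)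
  have h := he.apply_reflectionProd htop x x
  rw [← sub_eq_zero.1 hx, Module.End.one_apply, eq_neg_iff_add_eq_zero, ← two_mul] at h
  exact (mul_eq_zero.1 h).resolve_left two_ne_zero

theorem length_le (hχ : ∀ x, χ x x = 0 → x = 0) (he : IsExceptional χ l)
    (htop : listSpan 𝕜 l = ⊤) (hL : reflectionProd χ L = reflectionProd χ l) :
    l.length ≤ L.length := by
  have := finiteDimensional_of_listSpan_eq_top htop
  have hLtop : listSpan 𝕜 L = ⊤ := by
    refine eq_top_iff.2 fun x _ => ?_
    obtain ⟨y, rfl⟩ :=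
      LinearMap.injective_iff_surjective.1 (he.sub_reflectionProd_injective hχ htop) x
    exact hL ▸ sub_reflectionProd_mem L y
  rw [← he.finrank_eq_length htop, ← finrank_top 𝕜 V, ← hLtop]
  exact finrank_listSpan_le L

/-- The map `1 - w` sends the vectors fixed by the reflections in `L₂` into the span of `L₁`, and by
a dimension count onto it. -/
theorem apply_eq_zero_of_factorisation (hχ : ∀ x, χ x x = 0 → x = 0) (he : IsExceptional χ l)
    (htop : listSpan 𝕜 l = ⊤) (hL : reflectionProd χ (L₁ ++ L₂) = reflectionProd χ l)
    (hlen : (L₁ ++ L₂).length = l.length) (hx : x ∈ L₁) (hy : y ∈ L₂) : χ x y = 0 := by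
  have := finiteDimensional_of_listSpan_eq_top htop
  have hinj := he.sub_reflectionProd_injective hχ htop
  let φ : V →ₗ[𝕜] Fin L₂.length → 𝕜 := LinearMap.pi fun i => χ (L₂.get i) + χ.flip (L₂.get i)
  have hφ {z : V} (hz : z ∈ LinearMap.ker φ) : ∀ y ∈ L₂, χ y z + χ z y = 0 := by
    intro y hy
    obtain ⟨i, rfl⟩ := List.get_of_mem hy
    exact congrFun (LinearMap.mem_ker.1 hz) i
  have hdim : L₁.length ≤ Module.finrank 𝕜 (LinearMap.ker φ) := by
    have hker := LinearMap.finrank_range_add_finrank_ker φ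
    have hrange := Submodule.finrank_le (LinearMap.range φ)
    rw [he.finrank_eq_length htop, ← hlen, List.length_append] at hker
    rw [Module.finrank_fin_fun] at hrange
    lia
  have hle : (LinearMap.ker φ).map (1 - reflectionProd χ l) ≤ listSpan 𝕜 L₁ := by
    rintro _ ⟨z, hz, rfl⟩
    rw [← hL, reflectionProd_append, LinearMap.sub_apply, Module.End.mul_apply,
      reflectionProd_apply_of_orthogonal (hφ hz)]
    exact sub_reflectionProd_mem L₁ z
  have hmap : (LinearMap.ker φ).map (1 - reflectionProd χ l) = listSpan 𝕜 L₁ := by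
    refine Submodule.eq_of_le_of_finrank_le hle ?_
    rw [← (Submodule.equivMapOfInjective _ hinj (LinearMap.ker φ)).finrank_eq]
    exact (finrank_listSpan_le L₁).trans hdim
  obtain ⟨z, hz, rfl⟩ := hmap.ge (mem_listSpan hx)
  rw [LinearMap.sub_apply, Module.End.one_apply,
    he.apply_sub_reflectionProd z (htop ▸ Submodule.mem_top), add_comm]
  exact hφ hz y hy

theorem of_factorisation (hχ : ∀ x, χ x x = 0 → x = 0) (he : IsExceptional χ l)
    (htop : listSpan 𝕜 l = ⊤) (hunit : ∀ x ∈ L, χ x x = 1)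
    (hL : reflectionProd χ L = reflectionProd χ l) (hlen : L.length = l.length) :
    IsExceptional χ L where
  unit := hunit
  pairwise := by
    refine List.pairwise_iff_forall_sublist.2 fun {a b} hab => ?_
    obtain ⟨L₁, L₂, rfl, ha, hb⟩ := List.cons_sublist_iff.1 hab
    exact he.apply_eq_zero_of_factorisation hχ htop hL hlen ha (List.singleton_sublist.1 hb)

end IsExceptional

end

variable {𝕜 V : Type*} [Field 𝕜] [LinearOrder 𝕜] [IsStrictOrderedRing 𝕜] [AddCommGroup V]
  [Module 𝕜 V] {χ : LinearMap.BilinForm 𝕜 V} {Φ : Set V} {l K L : List V}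

theorem IsSimpleSeq.exists_isExceptional_append_of_le (hR : IsRootSystem χ Φ)
    (hS : IsSimpleSeq χ Φ l) (htop : listSpan 𝕜 l = ⊤) (hK : ∀ x ∈ K, x ∈ Φ)
    (heK : IsExceptional χ K) (hL : ∀ x ∈ L, x ∈ Φ) (heL : IsExceptional χ L)
    (hKL : listSpan 𝕜 K ≤ listSpan 𝕜 L) :
    ∃ J, (∀ x ∈ J, x ∈ Φ) ∧ IsExceptional χ (K ++ J) ∧ listSpan 𝕜 (K ++ J) = listSpan 𝕜 L := by
  obtain ⟨l', hS', -, hl'⟩ := hS.exists_listSpan_eq hR htop hL heL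
  rw [← hl'] at hKL ⊢
  exact hS'.exists_isExceptional_append hR hK heK hKL

end Factorisation

/-! ### Reflection length -/

section Length

theorem rlen_prod_le {cs : CoxeterSystem M W} {l : List W} (hl : ∀ t ∈ l, cs.IsReflection t) :
    rlen cs l.prod ≤ l.length :=
  Nat.sInf_le ⟨l, hl, rfl, rfl⟩

variable (cs : CoxeterSystem M W)

theorem exists_length_eq_rlen (w : W) :
    ∃ l : List W, (∀ t ∈ l, cs.IsReflection t) ∧ l.length = rlen cs w ∧ l.prod = w := by
  refine Nat.sInf_mem (s := {k | ∃ l : List W, (∀ t ∈ l, cs.IsReflection t) ∧ l.length = k ∧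
    l.prod = w}) ?_
  obtain ⟨l, rfl⟩ := cs.wordProd_surjective w
  exact ⟨_, l.map cs.simple, List.forall_mem_map.2 fun i _ => cs.isReflection_simple i, rfl, rfl⟩

theorem rlen_one : rlen cs 1 = 0 :=
  Nat.le_zero.1 (rlen_prod_le (cs := cs) (l := []) (by simp))

theorem rlen_mul_le (x y : W) : rlen cs (x * y) ≤ rlen cs x + rlen cs y := by
  obtain ⟨l, hl, hlx, hx⟩ := exists_length_eq_rlen cs x
  obtain ⟨m, hm, hmy, hy⟩ := exists_length_eq_rlen cs y
  rw [← hlx, ← hmy, ← List.length_append]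
  simpa [hx, hy] using rlen_prod_le (List.forall_mem_append.2 ⟨hl, hm⟩)

theorem rlen_conj (v x : W) : rlen cs (v * x * v⁻¹) = rlen cs x := by
  have hle (v x : W) : rlen cs (v * x * v⁻¹) ≤ rlen cs x := by
    obtain ⟨l, hl, hlx, rfl⟩ := exists_length_eq_rlen cs x
    have h := rlen_prod_le (l := l.map (MulAut.conj v))
      (List.forall_mem_map.2 fun t ht => (hl t ht).conj v)
    rwa [← map_list_prod, List.length_map, hlx] at h
  exact (hle v x).antisymm (by simpa [mul_assoc] using hle v⁻¹ (v * x * v⁻¹))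

theorem rlen_mul_comm (x y : W) : rlen cs (x * y) = rlen cs (y * x) := by
  simpa [mul_assoc] using rlen_conj cs x (y * x)

theorem one_rle (x : W) : rle cs 1 x := by
  simp [rle, rlen_one]

variable {cs} {v x y z : W}

theorem eq_one_of_rlen_eq_zero (h : rlen cs x = 0) : x = 1 := by
  obtain ⟨l, -, hl, rfl⟩ := exists_length_eq_rlen cs x
  rw [List.length_eq_zero_iff.1 (hl.trans h), List.prod_nil]

theorem rle_conj : rle cs (v * x * v⁻¹) (v * y * v⁻¹) ↔ rle cs x y := by
  have h : (v * x * v⁻¹)⁻¹ * (v * y * v⁻¹) = v * (x⁻¹ * y) * v⁻¹ := by group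
  rw [rle, rle, h, rlen_conj, rlen_conj, rlen_conj]

theorem rle_mul_right : rle cs x (x * y) ↔ rlen cs (x * y) = rlen cs x + rlen cs y := by
  rw [rle, inv_mul_cancel_left]

theorem rle_mul_left : rle cs y (x * y) ↔ rlen cs (x * y) = rlen cs x + rlen cs y := by
  rw [rle, rlen_mul_comm cs y⁻¹, mul_inv_cancel_right, add_comm]

theorem rle_mul_right_iff_rle_mul_left : rle cs x (x * y) ↔ rle cs y (x * y) :=
  rle_mul_right.trans rle_mul_left.symm

theorem rle_trans (h : rle cs x y) (h' : rle cs y z) : rle cs x z := by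
  rw [rle] at *
  have hxz := rlen_mul_le cs (x⁻¹ * y) (y⁻¹ * z)
  have hz := rlen_mul_le cs x (x⁻¹ * z)
  rw [mul_assoc, mul_inv_cancel_left] at hxz
  rw [mul_inv_cancel_left] at hz
  lia

theorem eq_of_rle_of_rlen_le (h : rle cs x y) (h' : rlen cs y ≤ rlen cs x) : x = y := by
  rw [rle] at h
  exact inv_mul_eq_one.1 (eq_one_of_rlen_eq_zero (cs := cs) (by lia))

theorem rle_antisymm (h : rle cs x y) (h' : rle cs y x) : x = y :=
  eq_of_rle_of_rlen_le h (h'.ge.trans' (Nat.le_add_right _ _))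

theorem mul_inv_rle (h : rle cs x z) : rle cs (z * x⁻¹) z := by
  have := rle_mul_right_iff_rle_mul_left (cs := cs) (x := z * x⁻¹) (y := x)
  rw [inv_mul_cancel_right] at this
  exact this.2 h

/-- Right multiplication by `x` is an isomorphism from the interval `[1, z * x⁻¹]` onto the
interval `[x, z]`. -/
theorem rle_mul_inv_iff (h : rle cs x z) :
    rle cs y (z * x⁻¹) ↔ rle cs x (y * x) ∧ rle cs (y * x) z := by
  obtain ⟨z, rfl⟩ : ∃ z', z = z' * x := ⟨z * x⁻¹, by group⟩
  obtain ⟨a, rfl⟩ : ∃ a, z = a * y := ⟨z * y⁻¹, by group⟩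
  rw [mul_inv_cancel_right]
  have hy := rlen_mul_le cs y x
  have hz := rlen_mul_le cs a (y * x)
  have hay := rlen_mul_le cs a y
  rw [rle_mul_left] at h
  rw [mul_assoc] at h ⊢
  rw [rle_mul_left, rle_mul_left, rle_mul_left]
  lia

theorem mul_inv_rle_mul_inv (h : rle cs x y) (h' : rle cs y z) :
    rle cs (y * x⁻¹) (z * x⁻¹) := by
  rw [rle_mul_inv_iff (rle_trans h h'), inv_mul_cancel_right]
  exact ⟨h, h'⟩

end Length

section GeometricModel

variable {𝕜 V : Type*} [Field 𝕜] [LinearOrder 𝕜] [AddCommGroup V] [Module 𝕜 V]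

/-- A meet of `x` and `y` in the reflection order. -/
structure IsMeet (cs : CoxeterSystem M W) (x y z : W) : Prop where
  le_left : rle cs z x
  le_right : rle cs z y
  le : ∀ t, rle cs t x → rle cs t y → rle cs t z

/-- The interval `[1, γ]` has binary meets. -/
def HasMeets (cs : CoxeterSystem M W) (γ : W) : Prop :=
  ∀ x y, rle cs x γ → rle cs y γ → ∃ z, IsMeet cs x y z

/-- A faithful representation `ρ` under which the reflections of the Coxeter system correspond to
the roots in `Φ`, and `γ` is the product of the reflections of a simple exceptional sequence `l`
spanning `V`. -/
structure IsGeometricModel [IsStrictOrderedRing 𝕜] (cs : CoxeterSystem M W) (γ : W)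
    (χ : LinearMap.BilinForm 𝕜 V) (Φ : Set V) (ρ : W →* Module.End 𝕜 V) (l : List V) : Prop where
  injective : Function.Injective ρ
  exists_root : ∀ t, cs.IsReflection t → ∃ a ∈ Φ, ρ t = symmReflection χ a
  exists_reflection : ∀ a ∈ Φ, ∃ t, cs.IsReflection t ∧ ρ t = symmReflection χ a
  isRootSystem : IsRootSystem χ Φ
  isSimpleSeq : IsSimpleSeq χ Φ l
  listSpan_eq_top : listSpan 𝕜 l = ⊤
  map_eq_reflectionProd : ρ γ = reflectionProd χ l

variable [IsStrictOrderedRing 𝕜] {cs : CoxeterSystem M W} {γ u w : W}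
  {χ : LinearMap.BilinForm 𝕜 V} {Φ : Set V} {ρ : W →* Module.End 𝕜 V} {l K J L : List V}

namespace IsGeometricModel

variable (h : IsGeometricModel cs γ χ Φ ρ l)
include h

theorem isExceptional : IsExceptional χ l := h.isSimpleSeq.isExceptional h.isRootSystem

theorem exists_map_eq_reflectionProd (hL : ∀ x ∈ L, x ∈ Φ) :
    ∃ w, rlen cs w ≤ L.length ∧ ρ w = reflectionProd χ L := by
  induction L with
  | nil => exact ⟨1, (rlen_one cs).le, by simp [reflectionProd_nil]⟩
  | cons a L ih =>
    rw [List.forall_mem_cons] at hL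
    obtain ⟨w, hw, hρw⟩ := ih hL.2
    obtain ⟨t, ht, hρt⟩ := h.exists_reflection a hL.1
    have ht1 : rlen cs t ≤ 1 := by simpa using rlen_prod_le (List.forall_mem_singleton.2 ht)
    have htw := rlen_mul_le cs t w
    exact ⟨t * w, by rw [List.length_cons]; lia, by rw [map_mul, hρt, hρw, reflectionProd_cons]⟩

theorem exists_length_eq_rlen (w : W) :
    ∃ L : List V, (∀ x ∈ L, x ∈ Φ) ∧ L.length = rlen cs w ∧ ρ w = reflectionProd χ L := by
  obtain ⟨T, hT, hlen, rfl⟩ := Noncrossing.exists_length_eq_rlen cs w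
  rw [← hlen]
  clear hlen
  induction T with
  | nil => exact ⟨[], by simp, rfl, by simp [reflectionProd_nil]⟩
  | cons t T ih =>
    rw [List.forall_mem_cons] at hT
    obtain ⟨L, hL, hlen, hρ⟩ := ih hT.2
    obtain ⟨a, ha, hρt⟩ := h.exists_root t hT.1
    exact ⟨a :: L, List.forall_mem_cons.2 ⟨ha, hL⟩, by simp [hlen],
      by rw [List.prod_cons, map_mul, hρ, hρt, reflectionProd_cons]⟩

theorem rlen_eq_length : rlen cs γ = l.length := by
  refine le_antisymm ?_ ?_
  · obtain ⟨w, hw, hρw⟩ := h.exists_map_eq_reflectionProd h.isSimpleSeq.mem_root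
    rwa [← h.injective (hρw.trans h.map_eq_reflectionProd.symm)]
  · obtain ⟨L, -, hL, hρ⟩ := h.exists_length_eq_rlen γ
    rw [← hL]
    exact h.isExceptional.length_le h.isRootSystem.eq_zero h.listSpan_eq_top
      (hρ.symm.trans h.map_eq_reflectionProd)

theorem rle_of_append (hK : ∀ x ∈ K, x ∈ Φ) (hJ : ∀ x ∈ J, x ∈ Φ) (hu : ρ u = reflectionProd χ K)
    (hw : ρ w = reflectionProd χ (K ++ J)) (hlen : rlen cs w = (K ++ J).length) :
    rle cs u w ∧ rlen cs u = K.length := by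
  obtain ⟨u', hu', hρu'⟩ := h.exists_map_eq_reflectionProd hK
  obtain rfl := h.injective (hρu'.trans hu.symm)
  obtain ⟨v, hv, hρv⟩ := h.exists_map_eq_reflectionProd hJ
  obtain rfl : u' * v = w := h.injective (by rw [map_mul, hρu', hρv, hw, reflectionProd_append])
  have huv := rlen_mul_le cs u' v
  rw [List.length_append] at hlen
  rw [rle_mul_right]
  lia

theorem exists_append (hK : ∀ x ∈ K, x ∈ Φ) (heK : IsExceptional χ K) (hL : ∀ x ∈ L, x ∈ Φ)
    (heL : IsExceptional χ L) (hKL : listSpan 𝕜 K ≤ listSpan 𝕜 L) :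
    ∃ J, (∀ x ∈ J, x ∈ Φ) ∧ IsExceptional χ (K ++ J) ∧ listSpan 𝕜 (K ++ J) = listSpan 𝕜 L ∧
      (K ++ J).length = L.length ∧ reflectionProd χ (K ++ J) = reflectionProd χ L := by
  obtain ⟨J, hJ, he, hspan⟩ := h.isSimpleSeq.exists_isExceptional_append_of_le h.isRootSystem
    h.listSpan_eq_top hK heK hL heL hKL
  exact ⟨J, hJ, he, hspan, he.length_eq heL hspan,
    he.reflectionProd_eq h.isRootSystem.eq_zero heL hspan⟩

theorem exists_append_eq_top (hK : ∀ x ∈ K, x ∈ Φ) (heK : IsExceptional χ K) :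
    ∃ J, (∀ x ∈ J, x ∈ Φ) ∧ IsExceptional χ (K ++ J) ∧ listSpan 𝕜 (K ++ J) = ⊤ ∧
      (K ++ J).length = rlen cs γ ∧ reflectionProd χ (K ++ J) = ρ γ := by
  rw [h.rlen_eq_length, h.map_eq_reflectionProd, ← h.listSpan_eq_top]
  exact h.exists_append hK heK h.isSimpleSeq.mem_root h.isExceptional (h.listSpan_eq_top ▸ le_top)

theorem isExceptional_of_factorisation (hL : ∀ x ∈ L, x ∈ Φ) (hρ : reflectionProd χ L = ρ γ)
    (hlen : L.length = rlen cs γ) : IsExceptional χ L :=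
  h.isExceptional.of_factorisation h.isRootSystem.eq_zero h.listSpan_eq_top
    (fun x hx => h.isRootSystem.unit x (hL x hx)) (hρ.trans h.map_eq_reflectionProd)
    (hlen.trans h.rlen_eq_length)

theorem exists_isExceptional (hw : rle cs w γ) :
    ∃ L : List V, (∀ x ∈ L, x ∈ Φ) ∧ IsExceptional χ L ∧ ρ w = reflectionProd χ L := by
  obtain ⟨L, hL, hlenL, hρL⟩ := h.exists_length_eq_rlen w
  obtain ⟨K, hK, hlenK, hρK⟩ := h.exists_length_eq_rlen (w⁻¹ * γ)
  have he := h.isExceptional_of_factorisation (List.forall_mem_append.2 ⟨hL, hK⟩)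
    (by rw [reflectionProd_append, ← hρL, ← hρK, ← map_mul, mul_inv_cancel_left])
    (by rw [List.length_append, hlenL, hlenK, hw])
  exact ⟨L, hL, (IsExceptional.append_iff.1 he).1, hρL⟩

theorem rlen_of_isExceptional (hL : ∀ x ∈ L, x ∈ Φ) (he : IsExceptional χ L)
    (hw : ρ w = reflectionProd χ L) : rlen cs w = L.length := by
  obtain ⟨K, hK, -, -, hlen, hρ⟩ := h.exists_append_eq_top hL he
  exact (h.rle_of_append hL hK hw hρ.symm hlen.symm).2

theorem rle_iff_listSpan_le (hK : ∀ x ∈ K, x ∈ Φ) (heK : IsExceptional χ K) (hL : ∀ x ∈ L, x ∈ Φ)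
    (heL : IsExceptional χ L) (hu : ρ u = reflectionProd χ K) (hw : ρ w = reflectionProd χ L) :
    rle cs u w ↔ listSpan 𝕜 K ≤ listSpan 𝕜 L := by
  have hlenL := h.rlen_of_isExceptional hL heL hw
  constructor
  · intro hle
    obtain ⟨J, hJ, hlenJ, hρJ⟩ := h.exists_length_eq_rlen (u⁻¹ * w)
    obtain ⟨P, hP, heLP, htop, hlenP, hρP⟩ := h.exists_append_eq_top hL heL
    have hKJ : reflectionProd χ (K ++ J) = reflectionProd χ L := by
      rw [reflectionProd_append, ← hu, ← hρJ, ← map_mul, mul_inv_cancel_left, hw]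
    have hlenKJ : (K ++ J).length = L.length := by
      rw [← hlenL, hle, h.rlen_of_isExceptional hK heK hu, ← hlenJ, List.length_append]
    have he : IsExceptional χ (K ++ J ++ P) := h.isExceptional_of_factorisation
      (List.forall_mem_append.2 ⟨List.forall_mem_append.2 ⟨hK, hJ⟩, hP⟩)
      (by rw [reflectionProd_append, hKJ, ← reflectionProd_append, hρP])
      (by rw [List.length_append, hlenKJ, ← List.length_append, hlenP])
    refine listSpan_le.2 fun x hx => heLP.mem_listSpan_of_left_orthogonal h.isRootSystem.eq_zero
      (htop ▸ Submodule.mem_top) ?_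
    exact (IsExceptional.append_iff.1 he).2.2 x (List.mem_append_left J hx)
  · intro hle
    obtain ⟨J, hJ, -, -, hlen, hρ⟩ := h.exists_append hK heK hL heL hle
    exact (h.rle_of_append hK hJ hu (hw.trans hρ.symm) (hlenL.trans hlen.symm)).1

theorem hasMeets : HasMeets cs γ := by
  intro x y hx hy
  obtain ⟨L₁, hL₁, he₁, hρ₁⟩ := h.exists_isExceptional hx
  obtain ⟨L₂, hL₂, he₂, hρ₂⟩ := h.exists_isExceptional hy
  obtain ⟨_, ⟨L, hL, he, rfl⟩, hLL₁, hLL₂, hmem⟩ :=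
    h.isSimpleSeq.exists_isExceptionalSubspace_le_le h.isRootSystem h.listSpan_eq_top
      ⟨L₁, hL₁, he₁, rfl⟩ ⟨L₂, hL₂, he₂, rfl⟩
  obtain ⟨z, -, hρ⟩ := h.exists_map_eq_reflectionProd hL
  refine ⟨z, (h.rle_iff_listSpan_le hL he hL₁ he₁ hρ hρ₁).2 hLL₁,
    (h.rle_iff_listSpan_le hL he hL₂ he₂ hρ hρ₂).2 hLL₂, fun t htx hty => ?_⟩
  obtain ⟨K, hK, heK, hρK⟩ := h.exists_isExceptional (rle_trans htx hx)
  refine (h.rle_iff_listSpan_le hK heK hL he hρK hρ).2 (listSpan_le.2 fun a ha => ?_)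
  exact hmem a (hK a ha) ((h.rle_iff_listSpan_le hK heK hL₁ he₁ hρK hρ₁).1 htx (mem_listSpan ha))
    ((h.rle_iff_listSpan_le hK heK hL₂ he₂ hρK hρ₂).1 hty (mem_listSpan ha))

end IsGeometricModel

end GeometricModel

/-! ### The positive monoid -/

section PositiveMonoid

variable {cs : CoxeterSystem M W} {γ u x y z : W}

theorem pgen_one : pgen cs γ 1 = 1 := dif_neg fun h => h.1 rfl

theorem pgen_eq_of (hu : u ≠ 1 ∧ rle cs u γ) :
    pgen cs γ u = PresentedMonoid.of (posRels cs γ) ⟨u, hu⟩ := dif_pos hu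

theorem pgen_mul (hy : rle cs y (x * y)) (hxy : rle cs (x * y) γ) :
    pgen cs γ x * pgen cs γ y = pgen cs γ (x * y) := by
  obtain rfl | hx1 := eq_or_ne x 1
  · rw [pgen_one, one_mul, one_mul]
  obtain rfl | hy1 := eq_or_ne y 1
  · rw [pgen_one, mul_one, mul_one]
  have hx := rle_mul_right_iff_rle_mul_left.2 hy
  have hxy1 : x * y ≠ 1 := fun h => hx1 (rle_antisymm (h ▸ hx) (one_rle cs x))
  rw [pgen_eq_of ⟨hx1, rle_trans hx hxy⟩, pgen_eq_of ⟨hy1, rle_trans hy hxy⟩,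
    pgen_eq_of ⟨hxy1, hxy⟩]
  exact PresentedMonoid.mk_eq_mk_of_rel ⟨_, _, _, rfl, rfl, rfl, (rle_mul_left.1 hy).symm⟩

theorem pgen_mul_inv_mul (hxy : rle cs x y) (hyz : rle cs y z) (hz : rle cs z γ) :
    pgen cs γ (z * y⁻¹) * pgen cs γ (y * x⁻¹) = pgen cs γ (z * x⁻¹) := by
  have hmul : z * y⁻¹ * (y * x⁻¹) = z * x⁻¹ := by group
  rw [pgen_mul, hmul] <;> rw [hmul]
  · exact mul_inv_rle_mul_inv hxy hyz
  · exact rle_trans (mul_inv_rle (rle_trans hxy hyz)) hz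

theorem pgen_mul_inv_mul_pgen (hxy : rle cs x y) (hy : rle cs y γ) :
    pgen cs γ (y * x⁻¹) * pgen cs γ x = pgen cs γ y := by
  simpa using pgen_mul_inv_mul (one_rle cs x) hxy hy

end PositiveMonoid

section NormalForm

variable {cs : CoxeterSystem M W} {γ a b m x y z : W}

theorem rle_mul_right_mul_iff (h : rle cs a (x * a)) :
    rle cs z x ↔ rle cs a (z * a) ∧ rle cs (z * a) (x * a) := by
  rw [← rle_mul_inv_iff h, mul_inv_cancel_right]

theorem IsMeet.mul_right_eq (h : IsMeet cs x y z) (hx : rle cs a (x * a)) (hy : rle cs a (y * a))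
    (hm : IsMeet cs (x * a) (y * a) m) : m = z * a := by
  obtain ⟨haz, hzx⟩ := (rle_mul_right_mul_iff hx).1 h.le_left
  have hzy := ((rle_mul_right_mul_iff hy).1 h.le_right).2
  have ham := hm.le a hx hy
  have hmz : rle cs (m * a⁻¹) z := by
    refine h.le _ ((rle_mul_right_mul_iff hx).2 ?_) ((rle_mul_right_mul_iff hy).2 ?_) <;>
      rw [inv_mul_cancel_right]
    exacts [⟨ham, hm.le_left⟩, ⟨ham, hm.le_right⟩]
  rw [rle_mul_right_mul_iff haz, inv_mul_cancel_right] at hmz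
  exact rle_antisymm hmz.2 (hm.le _ hzx hzy)

/-- The interval `[1, γ]` of the reflection order. -/
abbrev NCInterval (cs : CoxeterSystem M W) (γ : W) := {x : W // rle cs x γ}

/-- For `r` and `a` in the interval `[1, γ]`, the longest `d ≤ r` such that `d * a` is reduced and
in the interval: by `rle_mul_inv_iff`, these conditions on `d * a` amount to `d ≤ γ * a⁻¹`. -/
noncomputable def head (hm : HasMeets cs γ) (r a : NCInterval cs γ) : W :=
  (hm r (γ * (a : W)⁻¹) r.2 (mul_inv_rle a.2)).choose

theorem isMeet_head (hm : HasMeets cs γ) (r a : NCInterval cs γ) :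
    IsMeet cs r (γ * (a : W)⁻¹) (head hm r a) :=
  (hm r (γ * (a : W)⁻¹) r.2 (mul_inv_rle a.2)).choose_spec

/-- A normal form `(X, r)` of the element `X * ⟨r⟩` of the positive monoid. -/
abbrev NormalForm (cs : CoxeterSystem M W) (γ : W) := PosMonoid cs γ × NCInterval cs γ

variable (hm : HasMeets cs γ)

theorem rle_head_mul (r a : NCInterval cs γ) : rle cs a (head hm r a * a) :=
  ((rle_mul_inv_iff a.2).1 (isMeet_head hm r a).le_right).1

theorem head_mul_rle (r a : NCInterval cs γ) : rle cs (head hm r a * a) γ :=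
  ((rle_mul_inv_iff a.2).1 (isMeet_head hm r a).le_right).2

theorem mul_inv_rle_mul_inv_of_mul (hb : rle cs b (a * b)) (hab : rle cs (a * b) γ) :
    rle cs a (γ * b⁻¹) ∧ rle cs (γ * (a * b)⁻¹) (γ * a⁻¹) := by
  have hbγ := rle_trans hb hab
  have ha : rle cs a (γ * b⁻¹) := (rle_mul_inv_iff hbγ).2 ⟨hb, hab⟩
  refine ⟨ha, ?_⟩
  simpa [mul_assoc] using mul_inv_rle_mul_inv ha (mul_inv_rle hbγ)

theorem isMeet_head_mul {r a b c : NCInterval cs γ} (hc : (a * b : W) = c)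
    (hb : rle cs (b : W) c) : IsMeet cs (head hm r a) (γ * (a * b : W)⁻¹) (head hm r c) := by
  have h := isMeet_head hm r a
  have h' := isMeet_head hm r c
  have hle := (mul_inv_rle_mul_inv_of_mul (hc ▸ hb) (hc ▸ c.2)).2
  rw [← hc] at h'
  exact ⟨h.le _ h'.le_left (rle_trans h'.le_right hle), h'.le_right,
    fun t ht ht' => h'.le t (rle_trans ht h.le_left) ht'⟩

/-- Right multiplication of a normal form by `⟨a⟩`. -/
noncomputable def step (a : NCInterval cs γ) (s : NormalForm cs γ) : NormalForm cs γ :=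
  (s.1 * pgen cs γ (s.2 * (head hm s.2 a)⁻¹), ⟨head hm s.2 a * a, head_mul_rle hm s.2 a⟩)

theorem step_fst_mul_pgen (a : NCInterval cs γ) (s : NormalForm cs γ) :
    (step hm a s).1 * pgen cs γ (step hm a s).2 = s.1 * pgen cs γ s.2 * pgen cs γ a := by
  rw [← pgen_mul_inv_mul_pgen (isMeet_head hm s.2 a).le_left s.2.2, mul_assoc, mul_assoc,
    pgen_mul (rle_head_mul hm s.2 a) (head_mul_rle hm s.2 a), ← mul_assoc]
  rfl

theorem head_step {a b c : NCInterval cs γ} (hc : (a * b : W) = c) (hb : rle cs (b : W) c)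
    (s : NormalForm cs γ) : head hm (step hm a s).2 b = head hm s.2 c * a := by
  have hγ : γ * (a * b : W)⁻¹ * a = γ * (b : W)⁻¹ := by group
  refine (isMeet_head_mul hm hc hb).mul_right_eq (rle_head_mul hm s.2 a) ?_ ?_ <;> rw [hγ]
  · exact (mul_inv_rle_mul_inv_of_mul (hc ▸ hb) (hc ▸ c.2)).1
  · exact isMeet_head hm (step hm a s).2 b

theorem step_step {a b c : NCInterval cs γ} (hc : (a * b : W) = c) (hb : rle cs (b : W) c)
    (s : NormalForm cs γ) : step hm b (step hm a s) = step hm c s := by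
  have hmul : head hm s.2 a * a * (head hm s.2 c * a)⁻¹ = head hm s.2 a * (head hm s.2 c)⁻¹ := by
    group
  refine Prod.ext ?_ (Subtype.ext ?_)
  · change (step hm a s).1 * pgen cs γ (head hm s.2 a * a * (head hm (step hm a s).2 b)⁻¹) = _
    rw [head_step hm hc hb, hmul, step, mul_assoc]
    exact congrArg (s.1 * ·) (pgen_mul_inv_mul (isMeet_head_mul hm hc hb).le_left
      (isMeet_head hm s.2 a).le_left s.2.2)
  · change head hm (step hm a s).2 b * b = head hm s.2 c * c
    rw [head_step hm hc hb, ← hc, mul_assoc]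

/-- The right action of the positive monoid on normal forms. -/
noncomputable def act : PosMonoid cs γ →* (Function.End (NormalForm cs γ))ᵐᵒᵖ :=
  PresentedMonoid.lift (rels := posRels cs γ)
    (fun a : NCGen cs γ =>
      (MulOpposite.op (step hm ⟨a, a.2.2⟩) : (Function.End (NormalForm cs γ))ᵐᵒᵖ)) (by
      rintro _ _ ⟨w₁, w₂, w₃, rfl, rfl, hw, hlen⟩
      simp only [map_mul, FreeMonoid.lift_eval_of]
      refine congrArg MulOpposite.op (funext fun s => step_step hm hw ?_ s)
      exact hw ▸ rle_mul_left.2 (hw ▸ hlen.symm))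

/-- The normal form of an element of the positive monoid. -/
noncomputable def normalForm (X : PosMonoid cs γ) : NormalForm cs γ :=
  (act hm X).unop (1, ⟨1, one_rle cs γ⟩)

theorem normalForm_mul_of (X : PosMonoid cs γ) (a : NCGen cs γ) :
    normalForm hm (X * PresentedMonoid.of (posRels cs γ) a) =
      step hm ⟨a, a.2.2⟩ (normalForm hm X) := by
  have ha : act hm (PresentedMonoid.of (posRels cs γ) a) =
      MulOpposite.op (step hm ⟨a, a.2.2⟩) := rfl
  rw [normalForm, map_mul, MulOpposite.unop_mul, ha]
  rfl

theorem normalForm_fst_mul_pgen (X : PosMonoid cs γ) :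
    (normalForm hm X).1 * pgen cs γ (normalForm hm X).2 = X := by
  have hX : X ∈ Submonoid.closure (Set.range (PresentedMonoid.of (posRels cs γ))) :=
    PresentedMonoid.closure_range_of (posRels cs γ) ▸ Submonoid.mem_top X
  induction hX using Submonoid.closure_induction_right with
  | one =>
    rw [normalForm, map_one]
    exact (one_mul _).trans pgen_one
  | mul_right X _ y hy ih =>
    obtain ⟨a, rfl⟩ := hy
    rw [normalForm_mul_of, step_fst_mul_pgen, ih, pgen_eq_of a.2]

include hm

theorem HasMeets.exists_isIntervalLUB {u w p : W} (hp : rle cs p γ) (hu : rle cs u p)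
    (hw : rle cs w p) : ∃ j, IsIntervalLUB cs γ {u, w} j := by
  obtain ⟨j, ⟨hj, huj, hwj⟩, hmin⟩ :=
    exists_minimalFor_of_wellFoundedLT (fun j => rle cs j γ ∧ rle cs u j ∧ rle cs w j) (rlen cs)
      ⟨p, hp, hu, hw⟩
  refine ⟨j, hj, by simp [huj, hwj], fun r hr hx => ?_⟩
  obtain ⟨d, hd⟩ := hm j r hj hr
  have hud := hd.le u huj (hx u (by simp))
  have hwd := hd.le w hwj (hx w (by simp))
  have hjd : rlen cs j ≤ rlen cs d :=
    hmin ⟨rle_trans hd.le_left hj, hud, hwd⟩ (hd.le_left.ge.trans' (Nat.le_add_right _ _))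
  exact eq_of_rle_of_rlen_le hd.le_left hjd ▸ hd.le_right

theorem HasMeets.exists_eq_mul_pgen {u w : W} (hu : u ≠ 1 ∧ rle cs u γ) (hw : w ≠ 1 ∧ rle cs w γ)
    {X Y : PosMonoid cs γ} (hXY : X * pgen cs γ u = Y * pgen cs γ w) :
    ∃ Q p, rle cs p γ ∧ rle cs u p ∧ rle cs w p ∧
      X = Q * pgen cs γ (p * u⁻¹) ∧ Y = Q * pgen cs γ (p * w⁻¹) := by
  have key {v : W} (hv : v ≠ 1 ∧ rle cs v γ) (Z : PosMonoid cs γ) :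
      rle cs v (normalForm hm (Z * pgen cs γ v)).2 ∧
        Z = (normalForm hm (Z * pgen cs γ v)).1 *
          pgen cs γ ((normalForm hm (Z * pgen cs γ v)).2 * v⁻¹) := by
    rw [pgen_eq_of hv, normalForm_mul_of]
    refine ⟨rle_head_mul hm _ ⟨v, hv.2⟩, ?_⟩
    have hZ := normalForm_fst_mul_pgen hm Z
    rw [← pgen_mul_inv_mul_pgen (isMeet_head hm _ ⟨v, hv.2⟩).le_left (normalForm hm Z).2.2,
      ← mul_assoc] at hZ
    simpa [step] using hZ.symm
  obtain ⟨hup, hX⟩ := key hu X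
  obtain ⟨hwp, hY⟩ := key hw Y
  rw [← hXY] at hwp hY
  exact ⟨_, _, (normalForm hm (X * pgen cs γ u)).2.2, hup, hwp, hX, hY⟩

end NormalForm

/-! ### The geometric representation -/

section Chebyshev

open Real Polynomial.Chebyshev

variable {θ : ℝ} {n : ℤ}

theorem sin_pi_div_pos {x : ℝ} (hx : 1 < x) : 0 < sin (π / x) :=
  sin_pos_of_pos_of_lt_pi (by positivity) (div_lt_self pi_pos hx)

theorem sin_two_mul_pi_div_pos {m : ℕ} (hm : 3 ≤ m) : 0 < sin (2 * (π / m)) := by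
  have hm' : (3 : ℝ) ≤ m := by exact_mod_cast hm
  rw [mul_div_assoc', mul_comm, ← div_div_eq_mul_div]
  exact sin_pi_div_pos (by linarith)

theorem S_eval_two_mul_cos_nonneg (hθ : 0 < sin θ) (h : 0 ≤ sin ((n + 1) * θ)) :
    0 ≤ (S ℝ n).eval (2 * cos θ) := by
  rw [← S_two_mul_real_cos] at h
  exact nonneg_of_mul_nonneg_left h hθ

theorem S_eval_two_mul_cos_two_mul_pi_div_eq_zero {m : ℕ} (hm : 3 ≤ m)
    (hn : (m : ℤ) = 2 * (n + 1)) : (S ℝ n).eval (2 * cos (2 * (π / m))) = 0 := by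
  have hm0 : (m : ℝ) ≠ 0 := by positivity
  have hn' : (m : ℝ) = 2 * (n + 1) := by exact_mod_cast hn
  have hθ : ((n : ℝ) + 1) * (2 * (π / m)) = π := by
    rw [← mul_assoc, mul_comm _ (2 : ℝ), ← hn', mul_div_cancel₀ _ hm0]
  refine (mul_eq_zero.1 ?_).resolve_right (sin_two_mul_pi_div_pos hm).ne'
  rw [S_two_mul_real_cos, hθ, sin_pi]

theorem S_eval_add_S_eval_two_mul_cos_two_mul_pi_div_eq_zero {m : ℕ} (hm : 3 ≤ m)
    (hn : (m : ℤ) = 2 * n + 1) : (S ℝ n).eval (2 * cos (2 * (π / m))) +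
      (S ℝ (n - 1)).eval (2 * cos (2 * (π / m))) = 0 := by
  have hm0 : (m : ℝ) ≠ 0 := by positivity
  have hn' : (m : ℝ) = 2 * n + 1 := by exact_mod_cast hn
  have hθ : ((n : ℝ) + 1) * (2 * (π / m)) =
      2 * π - (((n - 1 : ℤ) : ℝ) + 1) * (2 * (π / m)) := by
    push_cast
    field_simp
    linarith
  refine (mul_eq_zero.1 ?_).resolve_right (sin_two_mul_pi_div_pos hm).ne'
  rw [add_mul, S_two_mul_real_cos, S_two_mul_real_cos, hθ, sin_two_pi_sub, neg_add_cancel]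

theorem S_eval_two_mul_cos_pi_div_nonneg {m : ℕ} (hm : m ≠ 1) (hn : -1 ≤ n)
    (hnm : m = 0 ∨ n < m) : 0 ≤ (S ℝ n).eval (2 * cos (π / m)) := by
  have hn' : (0 : ℝ) ≤ n + 1 := by exact_mod_cast (by lia : 0 ≤ n + 1)
  obtain rfl | hm0 := eq_or_ne m 0
  · simpa [S_eval_two] using hn'
  have hm1 : (1 : ℝ) < m := by exact_mod_cast (by lia : 1 < m)
  refine S_eval_two_mul_cos_nonneg (sin_pi_div_pos hm1)
    (sin_nonneg_of_nonneg_of_le_pi (by positivity) ?_)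
  have hnm' : (n + 1 : ℝ) ≤ m := by exact_mod_cast (by lia : n + 1 ≤ m)
  rw [mul_div_left_comm]
  exact mul_le_of_le_one_right pi_nonneg ((div_le_one (by positivity)).2 hnm')

end Chebyshev

section Lengths

open CoxeterSystem

variable {cs : CoxeterSystem M W} {v w : W} {i j x : B} {ω : List B} {k : ℕ}

theorem not_isRightDescent_of_length_mul_wordProd_cons
    (h : cs.length (v * cs.wordProd (x :: ω)) = cs.length v + (ω.length + 1)) :
    ¬cs.IsRightDescent v x := by
  rw [wordProd_cons, ← mul_assoc] at h
  have hmul := cs.length_mul_le (v * cs.simple x) (cs.wordProd ω)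
  have hω := cs.length_wordProd_le ω
  rw [IsRightDescent]
  lia

theorem mul_wordProd_eq_of_isRightDescent (h : cs.IsRightDescent v x)
    (hlen : cs.length (v * cs.wordProd ω) = cs.length v + ω.length) :
    v * cs.wordProd ω = v * cs.simple x * cs.wordProd (x :: ω) ∧
      cs.length (v * cs.wordProd ω) = cs.length (v * cs.simple x) + (ω.length + 1) := by
  rw [wordProd_cons, mul_assoc, simple_mul_simple_cancel_left]
  rw [isRightDescent_iff] at h
  exact ⟨rfl, by lia⟩

/-- Take the alternating suffix of `w` as long as possible. -/
theorem exists_eq_mul_wordProd_alternatingWord (hj : cs.IsRightDescent w j) (i : B) :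
    ∃ v k, w = v * cs.wordProd (alternatingWord i j k) ∧ cs.length w = cs.length v + k ∧ 0 < k ∧
      ¬cs.IsRightDescent v i ∧ ¬cs.IsRightDescent v j := by
  obtain ⟨v, ⟨k, rfl, hlen, hk⟩, hmin⟩ := exists_minimalFor_of_wellFoundedLT
    (fun v => ∃ k, w = v * cs.wordProd (alternatingWord i j k) ∧ cs.length w = cs.length v + k ∧
      0 < k) cs.length
    ⟨w * cs.simple j, 1, by simp [alternatingWord], (cs.isRightDescent_iff.1 hj).symm, one_pos⟩
  have hnext : ¬cs.IsRightDescent v (if Even k then j else i) := by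
    intro hd
    obtain ⟨hv, hlen'⟩ := mul_wordProd_eq_of_isRightDescent hd (by rwa [length_alternatingWord])
    rw [← alternatingWord_succ'] at hv
    rw [length_alternatingWord] at hlen'
    exact hd.not_ge (hmin ⟨k + 1, hv, hlen', k.succ_pos⟩ hd.le)
  obtain ⟨k, rfl⟩ := Nat.exists_eq_succ_of_ne_zero hk.ne'
  have hfirst : ¬cs.IsRightDescent v (if Even k then j else i) := by
    rw [alternatingWord_succ'] at hlen
    exact not_isRightDescent_of_length_mul_wordProd_cons (by rwa [length_alternatingWord])
  refine ⟨v, k + 1, rfl, hlen, hk, ?_⟩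
  by_cases heven : Even k <;> simp_all [Nat.even_add_one]

/-- An alternating word of length `M i j` could also be written so as to end in `i`. -/
theorem lt_of_not_isRightDescent_mul_alternatingWord (hM : M i j ≠ 0)
    (hlen : cs.length (v * cs.wordProd (alternatingWord i j k)) = cs.length v + k)
    (hi : ¬cs.IsRightDescent (v * cs.wordProd (alternatingWord i j k)) i) : k < M i j := by
  have hword (i j : B) (k : ℕ) : cs.length (cs.wordProd (alternatingWord i j k)) ≤ k := by
    simpa using cs.length_wordProd_le (alternatingWord i j k)
  by_contra! hle
  obtain hlt | rfl := hle.lt_or_eq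
  · have hmul := cs.length_mul_le v (cs.wordProd (alternatingWord i j k))
    have hred := cs.not_isReduced_alternatingWord i j hM hlt
    have hk := hword i j k
    rw [CoxeterSystem.IsReduced, length_alternatingWord] at hred
    lia
  · obtain ⟨k, hk⟩ := Nat.exists_eq_succ_of_ne_zero hM
    have hbraid : cs.wordProd (alternatingWord i j (M i j)) =
        cs.wordProd (alternatingWord i j k) * cs.simple i := by
      have h := cs.wordProd_braidWord_eq i j
      rw [braidWord, braidWord, ← M.symmetric i j] at h
      rw [h, hk, alternatingWord_succ, wordProd_concat]
    have hmul := cs.length_mul_le v (cs.wordProd (alternatingWord i j k))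
    have hk' := hword i j k
    refine hi ?_
    rw [IsRightDescent, hlen, hbraid, mul_assoc, simple_mul_simple_cancel_right]
    lia

end Lengths

section GeometricRepresentation

open Real Polynomial.Chebyshev CoxeterSystem

variable [Fintype B] [DecidableEq B] (M)

/-- The `i`-th simple coroot of the geometric representation. For `M i j = 0`, which stands for an
infinite order, the junk value `π / 0 = 0` gives the correct value `-2`. -/
noncomputable def coroot (i : B) : (B → ℝ) →ₗ[ℝ] ℝ :=
  Fintype.linearCombination ℝ fun j => -2 * cos (π / M i j)

/-- The `i`-th simple root of the geometric representation. -/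
def simpleRoot (i : B) : B → ℝ := Pi.single i 1

theorem coroot_simpleRoot (i j : B) : coroot M i (simpleRoot j) = -2 * cos (π / M i j) := by
  simp [coroot, simpleRoot]

theorem coroot_simpleRoot_self (i : B) : coroot M i (simpleRoot i) = 2 := by
  simp [coroot_simpleRoot]

theorem coroot_simpleRoot_comm (i j : B) :
    coroot M i (simpleRoot j) = coroot M j (simpleRoot i) := by
  rw [coroot_simpleRoot, coroot_simpleRoot, M.symmetric]

theorem isLiftable_reflection :
    M.IsLiftable fun i => Module.reflection (coroot_simpleRoot_self M i) := by
  intro i j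
  ext1 z
  obtain rfl | hij := eq_or_ne i j
  · rw [M.diagonal, pow_one]
    exact Module.involutive_reflection (coroot_simpleRoot_self M i) z
  have ht : 2 * cos (2 * (π / M i j)) =
      coroot M i (simpleRoot j) * coroot M j (simpleRoot i) - 2 := by
    rw [coroot_simpleRoot_comm M j, coroot_simpleRoot, cos_two_mul]
    ring
  rw [Module.reflection_mul_reflection_pow_apply _ _ _ _ _ ht]
  change _ = z
  obtain hM | hM | hM : M i j = 0 ∨ M i j = 2 ∨ 3 ≤ M i j := by
    have := M.off_diagonal i j hij
    lia
  · simp [hM]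
  · have h0 : coroot M i (simpleRoot j) = 0 := by simp [coroot_simpleRoot, hM]
    rw [← coroot_simpleRoot_comm M i j, h0, hM, Nat.cast_two, mul_div_cancel₀ _ two_ne_zero]
    norm_num
    module
  obtain ⟨k, hk⟩ | ⟨k, hk⟩ := Int.even_or_odd (M i j : ℤ)
  · rw [show ((M i j : ℤ) - 2) / 2 = k - 1 by lia, show ((M i j : ℤ) - 1) / 2 = k - 1 by lia,
      S_eval_two_mul_cos_two_mul_pi_div_eq_zero hM (by lia)]
    simp
  · rw [show ((M i j : ℤ) - 2) / 2 = k - 1 by lia, show ((M i j : ℤ) - 1) / 2 = k by lia,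
      show ((M i j : ℤ) - 3) / 2 = k - 1 by lia, show (M i j : ℤ) / 2 = k by lia,
      S_eval_add_S_eval_two_mul_cos_two_mul_pi_div_eq_zero hM hk]
    simp

variable {M} (cs : CoxeterSystem M W)

/-- The geometric representation of a Coxeter group. -/
noncomputable def geom : W →* Module.End ℝ (B → ℝ) :=
  LinearEquiv.automorphismGroup.toLinearMapMonoidHom.comp
    (cs.lift ⟨fun i => Module.reflection (coroot_simpleRoot_self M i), isLiftable_reflection M⟩)

theorem geom_simple (i : B) (x : B → ℝ) :
    geom cs (cs.simple i) x = x - coroot M i x • simpleRoot i := by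
  rw [geom, MonoidHom.comp_apply, cs.lift_apply_simple (isLiftable_reflection M)]
  exact Module.reflection_apply x (coroot_simpleRoot_self M i)

theorem geom_simple_simpleRoot_self (i : B) :
    geom cs (cs.simple i) (simpleRoot i) = -simpleRoot i := by
  rw [geom_simple, coroot_simpleRoot_self]
  module

theorem geom_wordProd_alternatingWord (i j : B) (k : ℕ) :
    geom cs (cs.wordProd (alternatingWord i j k)) (simpleRoot i) =
      (S ℝ (if Even k then k else k - 1)).eval (2 * cos (π / M i j)) • simpleRoot i +
      (S ℝ (if Even k then k - 1 else k)).eval (2 * cos (π / M i j)) • simpleRoot j := by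
  induction k with
  | zero => simp [alternatingWord]
  | succ k ih =>
    have hS := congrArg (Polynomial.eval (2 * cos (π / M i j))) (S_add_one ℝ (k : ℤ))
    rw [Polynomial.eval_sub, Polynomial.eval_mul, Polynomial.eval_X] at hS
    have hsucc : Even (k + 1) ↔ ¬Even k := Nat.even_add_one
    rw [alternatingWord_succ', wordProd_cons, map_mul, Module.End.mul_apply, ih]
    by_cases hk : Even k
    · simp only [hk, hsucc, not_true, if_true, if_false, Nat.cast_succ, add_sub_cancel_right, hS,
        geom_simple, map_add, map_smul, coroot_simpleRoot_self, coroot_simpleRoot, M.symmetric j i]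
      module
    · simp only [hk, hsucc, not_false_iff, if_true, if_false, Nat.cast_succ, add_sub_cancel_right,
        hS, geom_simple, map_add, map_smul, coroot_simpleRoot_self, coroot_simpleRoot]
      module

/-- Split off a maximal alternating word in `i` and a right descent `j`; the rest is shorter and
has neither `i` nor `j` as a descent. -/
theorem geom_simpleRoot_nonneg {w : W} {i : B} (hi : ¬cs.IsRightDescent w i) :
    0 ≤ geom cs w (simpleRoot i) := by
  induction hn : cs.length w using Nat.strong_induction_on generalizing w i with
  | _ n ih =>
  subst hn
  obtain rfl | hw := eq_or_ne w 1
  · rw [map_one, Module.End.one_apply, simpleRoot]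
    exact Pi.single_nonneg.2 zero_le_one
  obtain ⟨j, hj⟩ := cs.exists_rightDescent_of_ne_one hw
  have hij : i ≠ j := by
    rintro rfl
    exact hi hj
  obtain ⟨v, k, rfl, hlen, hk, hvi, hvj⟩ := exists_eq_mul_wordProd_alternatingWord hj i
  have hkM : M i j = 0 ∨ (k : ℤ) < M i j := by
    rw [Nat.cast_lt]
    exact or_iff_not_imp_left.2 fun hM =>
      lt_of_not_isRightDescent_mul_alternatingWord hM hlen hi
  have hM := M.off_diagonal i j hij
  have hvlt : cs.length v < cs.length (v * cs.wordProd (alternatingWord i j k)) := by lia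
  rw [map_mul, Module.End.mul_apply, geom_wordProd_alternatingWord, map_add, map_smul, map_smul]
  refine add_nonneg
    (smul_nonneg (S_eval_two_mul_cos_pi_div_nonneg hM ?_ ?_) (ih _ hvlt hvi rfl))
    (smul_nonneg (S_eval_two_mul_cos_pi_div_nonneg hM ?_ ?_) (ih _ hvlt hvj rfl)) <;>
  split_ifs <;> lia

theorem geom_simpleRoot_nonpos {w : W} {i : B} (hi : cs.IsRightDescent w i) :
    geom cs w (simpleRoot i) ≤ 0 := by
  have h := geom_simpleRoot_nonneg cs ((cs.isRightDescent_iff_not_isRightDescent_mul).1 hi)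
  rw [map_mul, Module.End.mul_apply, geom_simple_simpleRoot_self, map_neg] at h
  exact neg_nonneg.1 h

theorem geom_injective : Function.Injective (geom cs) := by
  rw [injective_iff_map_eq_one]
  intro w hw
  by_contra hne
  obtain ⟨j, hj⟩ := cs.exists_rightDescent_of_ne_one hne
  have h := geom_simpleRoot_nonpos cs hj j
  rw [hw, Module.End.one_apply, simpleRoot, Pi.single_eq_same, Pi.zero_apply] at h
  exact zero_lt_one.not_ge h

end GeometricRepresentation

section InvariantForm

open CoxeterSystem

variable [DecidableEq B]

theorem simpleRoot_ne_zero (i : B) : simpleRoot i ≠ 0 := by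
  simp [simpleRoot]

variable [Fintype B]

theorem eq_sum_smul_simpleRoot (x : B → ℝ) : x = ∑ i, x i • simpleRoot i :=
  pi_eq_sum_univ' x

theorem apply_self_eq_sum (b : LinearMap.BilinForm ℝ (B → ℝ)) (x : B → ℝ) :
    b x x = ∑ i, ∑ j, x i * x j * b (simpleRoot i) (simpleRoot j) := by
  conv_lhs => rw [eq_sum_smul_simpleRoot x]
  simp only [map_sum, map_smul, LinearMap.sum_apply, LinearMap.smul_apply, smul_eq_mul,
    Finset.mul_sum]
  rw [Finset.sum_comm]
  exact Finset.sum_congr rfl fun i _ => Finset.sum_congr rfl fun j _ => by ring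

variable [Fintype W] (cs : CoxeterSystem M W)

/-- The inner product on the geometric representation of a finite Coxeter group obtained by
averaging the dot product over the group. -/
noncomputable def invariantForm : LinearMap.BilinForm ℝ (B → ℝ) :=
  ∑ w : W, (dotProductBilin ℝ ℝ).compl₁₂ (geom cs w) (geom cs w)

theorem invariantForm_apply (x y : B → ℝ) :
    invariantForm cs x y = ∑ w : W, geom cs w x ⬝ᵥ geom cs w y := by
  simp [invariantForm, LinearMap.sum_apply, dotProductBilin]

theorem invariantForm_comm (x y : B → ℝ) : invariantForm cs x y = invariantForm cs y x := by
  rw [invariantForm_apply, invariantForm_apply]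
  exact Finset.sum_congr rfl fun w _ => dotProduct_comm _ _

theorem invariantForm_geom (g : W) (x y : B → ℝ) :
    invariantForm cs (geom cs g x) (geom cs g y) = invariantForm cs x y := by
  rw [invariantForm_apply, invariantForm_apply]
  refine Fintype.sum_equiv (Equiv.mulRight g) _ _ fun w => ?_
  simp only [Equiv.coe_mulRight, map_mul, Module.End.mul_apply]

theorem invariantForm_self_pos {x : B → ℝ} (hx : x ≠ 0) : 0 < invariantForm cs x x := by
  have hnonneg (y : B → ℝ) : 0 ≤ y ⬝ᵥ y := Finset.sum_nonneg fun i _ => mul_self_nonneg _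
  rw [invariantForm_apply]
  refine Finset.sum_pos' (fun w _ => hnonneg _) ⟨1, Finset.mem_univ _, ?_⟩
  rw [map_one, Module.End.one_apply]
  exact (hnonneg x).lt_of_ne' (dotProduct_self_eq_zero.not.2 hx)

theorem coroot_mul_invariantForm_self (i : B) (x : B → ℝ) :
    coroot M i x * invariantForm cs (simpleRoot i) (simpleRoot i) =
      2 * invariantForm cs x (simpleRoot i) := by
  have h := invariantForm_geom cs (cs.simple i) x (simpleRoot i)
  rw [geom_simple_simpleRoot_self, geom_simple, map_neg, map_sub, map_smul, LinearMap.sub_apply,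
    LinearMap.smul_apply, smul_eq_mul] at h
  linarith

/-- Whenever `α_i` and `α_j` are not orthogonal, symmetry of both forms forces them to have equal
length for the invariant form. -/
theorem coroot_simpleRoot_mul_sqrt (i j : B) :
    coroot M i (simpleRoot j) * √(invariantForm cs (simpleRoot i) (simpleRoot i)) *
        √(invariantForm cs (simpleRoot j) (simpleRoot j)) =
      2 * invariantForm cs (simpleRoot i) (simpleRoot j) := by
  have hi := coroot_mul_invariantForm_self cs i (simpleRoot j)
  have hj := coroot_mul_invariantForm_self cs j (simpleRoot i)
  rw [invariantForm_comm cs (simpleRoot j)] at hi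
  rw [coroot_simpleRoot_comm] at hj
  obtain h0 | h0 := eq_or_ne (coroot M i (simpleRoot j)) 0
  · simp only [h0, zero_mul] at hi ⊢
    exact hi
  · have hlen := mul_left_cancel₀ h0 (hi.trans hj.symm)
    rw [← hlen, mul_assoc, Real.mul_self_sqrt (invariantForm_self_pos cs (simpleRoot_ne_zero i)).le,
      hi]

end InvariantForm

section EulerForm

open CoxeterSystem

variable [Fintype B] [DecidableEq B] (M) {l : List B}

/-- The non-symmetric bilinear form attached to an ordering `l` of the simple roots: it is
triangular with respect to `l`, and its symmetrisation is twice the Tits form, that is,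
`(α_i, α_j) ↦ -2 cos (π / M i j)`. -/
noncomputable def eulerForm (l : List B) : LinearMap.BilinForm ℝ (B → ℝ) :=
  Matrix.toBilin' fun i j =>
    if l.idxOf i < l.idxOf j then 0 else if i = j then 1 else coroot M i (simpleRoot j)

theorem eulerForm_simpleRoot (l : List B) (i j : B) :
    eulerForm M l (simpleRoot i) (simpleRoot j) =
      if l.idxOf i < l.idxOf j then 0 else if i = j then 1 else coroot M i (simpleRoot j) :=
  Matrix.toBilin'_single _ i j

theorem eulerForm_simpleRoot_self (l : List B) (i : B) :
    eulerForm M l (simpleRoot i) (simpleRoot i) = 1 := by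
  simp [eulerForm_simpleRoot]

theorem eulerForm_simpleRoot_add_swap (hl : ∀ i, i ∈ l) (i : B) (x : B → ℝ) :
    eulerForm M l (simpleRoot i) x + eulerForm M l x (simpleRoot i) = coroot M i x := by
  suffices h : eulerForm M l (simpleRoot i) + (eulerForm M l).flip (simpleRoot i) = coroot M i from
    LinearMap.congr_fun h x
  refine (Pi.basisFun ℝ B).ext fun j => ?_
  rw [Pi.basisFun_apply]
  change eulerForm M l (simpleRoot i) (simpleRoot j) + eulerForm M l (simpleRoot j) (simpleRoot i) =
    coroot M i (simpleRoot j)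
  obtain rfl | hij := eq_or_ne i j
  · rw [eulerForm_simpleRoot_self, coroot_simpleRoot_self]
    norm_num
  rw [eulerForm_simpleRoot, eulerForm_simpleRoot, if_neg hij, if_neg hij.symm,
    coroot_simpleRoot_comm M j]
  obtain h | h := lt_or_gt_of_ne (mt (List.idxOf_inj (hl i)).1 hij)
  · rw [if_pos h, if_neg h.not_gt, zero_add]
  · rw [if_pos h, if_neg h.not_gt, add_zero]

theorem coroot_simpleRoot_nonpos {i j : B} (hij : i ≠ j) : coroot M i (simpleRoot j) ≤ 0 := by
  have hM := M.off_diagonal i j hij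
  have h := S_eval_two_mul_cos_pi_div_nonneg (n := 1) hM (by lia) (by lia)
  rw [Polynomial.Chebyshev.S_one, Polynomial.eval_X] at h
  rw [coroot_simpleRoot, neg_mul]
  exact neg_nonpos.2 h

variable {M} (cs : CoxeterSystem M W)

include cs in
/-- Rescaling the simple roots to unit length turns the invariant form into the Tits form. -/
theorem eulerForm_self_pos [Finite W] (hl : ∀ i, i ∈ l) {x : B → ℝ} (hx : x ≠ 0) :
    0 < eulerForm M l x x := by
  cases nonempty_fintype W
  set d : B → ℝ := fun i => √(invariantForm cs (simpleRoot i) (simpleRoot i))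
  have hd (i : B) : d i ≠ 0 :=
    (Real.sqrt_pos.2 (invariantForm_self_pos cs (simpleRoot_ne_zero i))).ne'
  obtain ⟨y, rfl⟩ : ∃ y, x = y * d := ⟨x / d, funext fun i => (div_mul_cancel₀ (x i) (hd i)).symm⟩
  have hy : y ≠ 0 := left_ne_zero_of_mul hx
  have hsymm : (eulerForm M l + (eulerForm M l).flip) (y * d) (y * d) =
      ((2 : ℝ) • invariantForm cs) y y := by
    rw [apply_self_eq_sum, apply_self_eq_sum]
    refine Finset.sum_congr rfl fun i _ => Finset.sum_congr rfl fun j _ => ?_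
    rw [LinearMap.add_apply, LinearMap.add_apply, LinearMap.BilinForm.flip_apply,
      eulerForm_simpleRoot_add_swap M hl, LinearMap.smul_apply, LinearMap.smul_apply, smul_eq_mul,
      ← coroot_simpleRoot_mul_sqrt, Pi.mul_apply, Pi.mul_apply]
    ring
  rw [LinearMap.add_apply, LinearMap.add_apply, LinearMap.BilinForm.flip_apply,
    LinearMap.smul_apply, LinearMap.smul_apply, smul_eq_mul, ← two_mul] at hsymm
  rw [mul_left_cancel₀ two_ne_zero hsymm]
  exact invariantForm_self_pos cs hy

theorem geom_simple_eq_symmReflection (hl : ∀ i, i ∈ l) (i : B) :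
    geom cs (cs.simple i) = symmReflection (eulerForm M l) (simpleRoot i) := by
  refine LinearMap.ext fun x => ?_
  rw [geom_simple, symmReflection_apply, eulerForm_simpleRoot_add_swap M hl]

theorem geom_wordProd_eq_reflectionProd (hl : ∀ i, i ∈ l) (L : List B) :
    geom cs (cs.wordProd L) = reflectionProd (eulerForm M l) (L.map simpleRoot) := by
  induction L with
  | nil => rw [wordProd_nil, map_one, List.map_nil, reflectionProd_nil]
  | cons i L ih =>
    rw [wordProd_cons, map_mul, ih, List.map_cons, reflectionProd_cons,
      geom_simple_eq_symmReflection cs hl]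

theorem eulerForm_geom_add_swap (hl : ∀ i, i ∈ l) (g : W) (x y : B → ℝ) :
    eulerForm M l (geom cs g x) (geom cs g y) + eulerForm M l (geom cs g y) (geom cs g x) =
      eulerForm M l x y + eulerForm M l y x := by
  induction g using cs.simple_induction_left generalizing x y with
  | one => simp only [map_one, Module.End.one_apply]
  | mul_simple_left g i ih =>
    rw [map_mul, Module.End.mul_apply, Module.End.mul_apply, geom_simple_eq_symmReflection cs hl,
      apply_symmReflection_add_swap (eulerForm_simpleRoot_self M l i), ih]

theorem geom_conj_simple (hl : ∀ i, i ∈ l) (w : W) (i : B) :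
    geom cs (w * cs.simple i * w⁻¹) =
      symmReflection (eulerForm M l) (geom cs w (simpleRoot i)) := by
  refine LinearMap.ext fun x => ?_
  have hx : geom cs w (geom cs w⁻¹ x) = x := by
    rw [← Module.End.mul_apply, ← map_mul, mul_inv_cancel, map_one, Module.End.one_apply]
  have h := eulerForm_geom_add_swap cs hl w (simpleRoot i) (geom cs w⁻¹ x)
  rw [hx, eulerForm_simpleRoot_add_swap M hl] at h
  rw [symmReflection_apply, h, map_mul, map_mul, Module.End.mul_apply, Module.End.mul_apply,
    geom_simple, map_sub, map_smul, hx]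

end EulerForm

section RootSystem

open CoxeterSystem

variable [Fintype B] [DecidableEq B] (cs : CoxeterSystem M W) {l : List B} {a x : B → ℝ}

/-- The roots of a Coxeter group: the images of the simple roots under the group. -/
def roots : Set (B → ℝ) := Set.range fun p : W × B => geom cs p.1 (simpleRoot p.2)

theorem nonneg_or_neg_nonneg_of_mem_roots (hx : x ∈ roots cs) : 0 ≤ x ∨ 0 ≤ -x := by
  obtain ⟨⟨w, i⟩, rfl⟩ := hx
  by_cases h : cs.IsRightDescent w i
  · exact Or.inr (neg_nonneg.2 (geom_simpleRoot_nonpos cs h))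
  · exact Or.inl (geom_simpleRoot_nonneg cs h)

theorem exists_isReflection_geom_eq (hl : ∀ i, i ∈ l) (ha : a ∈ roots cs) :
    ∃ t, cs.IsReflection t ∧ geom cs t = symmReflection (eulerForm M l) a := by
  obtain ⟨⟨w, i⟩, rfl⟩ := ha
  exact ⟨_, ⟨w, i, rfl⟩, geom_conj_simple cs hl w i⟩

theorem isRootSystem_roots [Finite W] (hl : ∀ i, i ∈ l) :
    IsRootSystem (eulerForm M l) (roots cs) where
  pos _ hx := eulerForm_self_pos cs hl hx
  unit x hx := by
    obtain ⟨⟨w, i⟩, rfl⟩ := hx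
    have h := eulerForm_geom_add_swap cs hl w (simpleRoot i) (simpleRoot i)
    rw [eulerForm_simpleRoot_self] at h
    linarith
  finite := Set.finite_range _
  symmReflection_mem a ha x hx := by
    obtain ⟨t, -, ht⟩ := exists_isReflection_geom_eq cs hl ha
    obtain ⟨⟨w, i⟩, rfl⟩ := hx
    exact ⟨(t * w, i), by simp only [map_mul, Module.End.mul_apply, ht]⟩

omit [Fintype B] in
theorem listSpan_map_simpleRoot (hl : ∀ i, i ∈ l) : listSpan ℝ (l.map simpleRoot) = ⊤ := by
  let _ : Fintype B := .ofList l hl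
  refine eq_top_iff.2 fun x _ => ?_
  rw [eq_sum_smul_simpleRoot x]
  exact sum_mem fun i _ => Submodule.smul_mem _ _ (mem_listSpan (List.mem_map_of_mem (hl i)))

omit [Fintype B] in
theorem mem_listCone_map_simpleRoot (hl : ∀ i, i ∈ l) (hx : 0 ≤ x) :
    x ∈ listCone ℝ (l.map simpleRoot) := by
  let _ : Fintype B := .ofList l hl
  rw [eq_sum_smul_simpleRoot x]
  exact sum_mem fun i _ =>
    Submodule.smul_mem _ (⟨x i, hx i⟩ : {c : ℝ // 0 ≤ c})
      (mem_listCone (List.mem_map_of_mem (hl i)))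

theorem isSimpleSeq_map_simpleRoot (hl : ∀ i, i ∈ l) (hnodup : l.Nodup) :
    IsSimpleSeq (eulerForm M l) (roots cs) (l.map simpleRoot) where
  mem_root a ha := by
    obtain ⟨i, -, rfl⟩ := List.mem_map.1 ha
    exact ⟨(1, i), by simp only [map_one, Module.End.one_apply]⟩
  pairwise := by
    have hidx : l.Pairwise fun i j => l.idxOf i < l.idxOf j := by
      rw [List.pairwise_iff_getElem]
      intro p q hp hq hpq
      rwa [hnodup.idxOf_getElem, hnodup.idxOf_getElem]
    refine List.pairwise_map.2 (hidx.imp fun {i j} h => ?_)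
    have hji : j ≠ i := by
      rintro rfl
      exact h.false
    rw [eulerForm_simpleRoot, if_pos h, eulerForm_simpleRoot, if_neg h.not_gt, if_neg hji]
    exact ⟨rfl, coroot_simpleRoot_nonpos M hji⟩
  mem_or_neg_mem x hx _ := (nonneg_or_neg_nonneg_of_mem_roots cs hx).imp
    (mem_listCone_map_simpleRoot hl) (mem_listCone_map_simpleRoot hl)

theorem isGeometricModel_wordProd [Finite W] (hl : ∀ i, i ∈ l) (hnodup : l.Nodup) :
    IsGeometricModel cs (cs.wordProd l) (eulerForm M l) (roots cs) (geom cs)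
      (l.map simpleRoot) where
  injective := geom_injective cs
  exists_root t ht := by
    obtain ⟨w, i, rfl⟩ := ht
    exact ⟨_, ⟨(w, i), rfl⟩, geom_conj_simple cs hl w i⟩
  exists_reflection _ := exists_isReflection_geom_eq cs hl
  isRootSystem := isRootSystem_roots cs hl
  isSimpleSeq := isSimpleSeq_map_simpleRoot cs hl hnodup
  listSpan_eq_top := listSpan_map_simpleRoot hl
  map_eq_reflectionProd := geom_wordProd_eq_reflectionProd cs hl l

end RootSystem

variable {cs : CoxeterSystem M W} {γ : W}

theorem HasMeets.conj (hm : HasMeets cs γ) (v : W) : HasMeets cs (v * γ * v⁻¹) := by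
  have hconj (x : W) : ∃ y, x = v * y * v⁻¹ := ⟨v⁻¹ * x * v, by group⟩
  intro x y hx hy
  obtain ⟨x, rfl⟩ := hconj x
  obtain ⟨y, rfl⟩ := hconj y
  obtain ⟨z, hzx, hzy, hz⟩ := hm x y ((rle_conj ..).1 hx) ((rle_conj ..).1 hy)
  refine ⟨v * z * v⁻¹, (rle_conj ..).2 hzx, (rle_conj ..).2 hzy, fun t htx hty => ?_⟩
  obtain ⟨t, rfl⟩ := hconj t
  exact (rle_conj ..).2 (hz t ((rle_conj ..).1 htx) ((rle_conj ..).1 hty))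

theorem hasMeets_of_isCoxeterElement [Fintype B] [Finite W] (hγ : IsCoxeterElement cs γ) :
    HasMeets cs γ := by
  classical
  obtain ⟨v, l, hnodup, hl, rfl⟩ := hγ
  exact (isGeometricModel_wordProd cs hl hnodup).hasMeets.conj v

end Noncrossing

/-- Right suffix lemma in the positive monoid: if `A⟨u⟩ = B⟨w⟩` then `A = C⟨e⟩`,
`B = C⟨f⟩` with `eu = fw = u ∨ w`. -/
theorem right_suffix_join [Fintype B] [Fintype W] (cs : CoxeterSystem M W) (γ : W)
    (hγ : IsCoxeterElement cs γ) (u w : W)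
    (hu : u ≠ 1 ∧ rle cs u γ) (hw : w ≠ 1 ∧ rle cs w γ)
    (A C' : PosMonoid cs γ)
    (hAB : A * PresentedMonoid.of (posRels cs γ) ⟨u, hu⟩ =
           C' * PresentedMonoid.of (posRels cs γ) ⟨w, hw⟩) :
    ∃ e f : W, rle cs e γ ∧ rle cs f γ ∧ ∃ C : PosMonoid cs γ,
      A = C * pgen cs γ e ∧ C' = C * pgen cs γ f ∧
      e * u = f * w ∧ IsIntervalLUB cs γ {u, w} (e * u) := by
  have hm := Noncrossing.hasMeets_of_isCoxeterElement hγ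
  rw [← Noncrossing.pgen_eq_of hu, ← Noncrossing.pgen_eq_of hw] at hAB
  obtain ⟨Q, p, hp, hup, hwp, rfl, rfl⟩ := hm.exists_eq_mul_pgen hu hw hAB
  obtain ⟨j, hj⟩ := hm.exists_isIntervalLUB hp hup hwp
  have huj : rle cs u j := hj.2.1 u (by simp)
  have hwj : rle cs w j := hj.2.1 w (by simp)
  have hjp : rle cs j p := hj.2.2 p hp (by simp [hup, hwp])
  refine ⟨j * u⁻¹, j * w⁻¹, Noncrossing.rle_trans (Noncrossing.mul_inv_rle huj) hj.1,
    Noncrossing.rle_trans (Noncrossing.mul_inv_rle hwj) hj.1,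
    Q * pgen cs γ (p * j⁻¹), ?_, ?_, ?_, ?_⟩
  · rw [mul_assoc, Noncrossing.pgen_mul_inv_mul huj hjp hp]
  · rw [mul_assoc, Noncrossing.pgen_mul_inv_mul hwj hjp hp]
  · rw [inv_mul_cancel_right, inv_mul_cancel_right]
  · rwa [inv_mul_cancel_right]
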